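/- Let α ∈ (2,3) and n ≥ 2. The O'Hara energy E^α is continuously (Fréchet) differentiable on the set of all injective regular curves in H^{(1+α)/2,2}(ℝ/ℤ,ℝⁿ); in particular this set is open in H^{(1+α)/2,2}(ℝ/ℤ,ℝⁿ), E^α is finite on it, and the Fréchet derivative γ ↦ (E^α)'(γ) ∈ (H^{(1+α)/2,2}(ℝ/ℤ,ℝⁿ))* is continuous. -/

import Mathlib

open MeasureTheory Filter Set
open scoped RealInnerProductSpace ENNReal Topology

noncomputable section

/-- `ℝⁿ` -/
abbrev Rn (n : ℕ) := EuclideanSpace ℝ (Fin n)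

variable {n : ℕ}

/-- A 1-periodic curve is injective as a map on `ℝ/ℤ`. -/
def PerInjective (γ : ℝ → Rn n) : Prop :=
  ∀ u v : ℝ, γ u = γ v → ∃ k : ℤ, v = u + k

/-- `γ` is a regular curve: `γ'(u) ≠ 0` for all `u`. -/
def RegularCurve (γ : ℝ → Rn n) : Prop := ∀ u : ℝ, deriv γ u ≠ 0

/-- `γ` is parametrized by arc-length: `|γ'(u)| = 1` for all `u`. -/
def ArcLengthParam (γ : ℝ → Rn n) : Prop := ∀ u : ℝ, ‖deriv γ u‖ = 1

/-- The length `L(γ) = ∫₀¹ |γ'(θ)| dθ` of the closed curve `γ`. -/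
def curveLen (γ : ℝ → Rn n) : ℝ := ∫ θ in (0:ℝ)..1, ‖deriv γ θ‖

/-- The arc length `L(γ|_{[u,u+w]}) = |∫_u^{u+w} |γ'(θ)| dθ|`. -/
def arcLen (γ : ℝ → Rn n) (u w : ℝ) : ℝ := |∫ θ in u..(u + w), ‖deriv γ θ‖|

/-- The intrinsic distance `d_γ(u+w,u)`. -/
def idist (γ : ℝ → Rn n) (u w : ℝ) : ℝ :=
  min (arcLen γ u w) (curveLen γ - arcLen γ u w)

/-- The integrand of the O'Hara energy `E^α`. -/
def ohIntegrand (α : ℝ) (γ : ℝ → Rn n) (u w : ℝ) : ℝ :=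
  (1 / ‖γ (u + w) - γ u‖ ^ α - 1 / idist γ u w ^ α) * ‖deriv γ (u + w)‖ * ‖deriv γ u‖

/-- The O'Hara energy `E^α`, with values in `[0,∞]`. -/
def oharaE (α : ℝ) (γ : ℝ → Rn n) : ℝ≥0∞ :=
  ∫⁻ u in Ioc (0:ℝ) 1, ∫⁻ w in Ioo (-(1:ℝ)/2) (1/2), ENNReal.ofReal (ohIntegrand α γ u w)

/-- The O'Hara energy `E^α` as a real number. -/
def oharaER (α : ℝ) (γ : ℝ → Rn n) : ℝ := (oharaE α γ).toReal

/-- `[−1/2,−ε] ∪ [ε,1/2]`, the `w`-section of `U_ε`. -/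
def Wset (ε : ℝ) : Set ℝ := Icc (-(1:ℝ)/2) (-ε) ∪ Icc ε (1/2)

/-- The truncated O'Hara energy `E^α_ε`, an integral over `U_ε`. -/
def oharaEeps (α ε : ℝ) (γ : ℝ → Rn n) : ℝ :=
  ∫ u in Ioc (0:ℝ) 1, ∫ w in Wset ε, ohIntegrand α γ u w

/-- `F` has directional (Gâteaux) derivative `d` at `γ` in direction `h`. -/
def HasDirDeriv (F : (ℝ → Rn n) → ℝ) (γ h : ℝ → Rn n) (d : ℝ) : Prop :=
  Tendsto (fun τ : ℝ => (F (γ + τ • h) - F γ) / τ) (𝓝[≠] (0:ℝ)) (𝓝 d)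

/-- Squared Gagliardo seminorm `[f]²_{H^{s,2}}` of a 1-periodic map. -/
def gagliardoSq (s : ℝ) {E : Type*} [NormedAddCommGroup E] (f : ℝ → E) : ℝ≥0∞ :=
  ∫⁻ u in Ioc (0:ℝ) 1, ∫⁻ w in Ioo (-(1:ℝ)/2) (1/2),
    ENNReal.ofReal (‖f (u + w) - f u‖ ^ 2 / |w| ^ (1 + 2 * s))

/-- Membership in the fractional Sobolev space `H^{1+σ,2}(ℝ/ℤ,ℝⁿ)`, `σ ∈ (0,1)`:
a 1-periodic `C¹` function whose derivative has finite Gagliardo seminorm of order `σ`. -/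
def MemH1 (σ : ℝ) (γ : ℝ → Rn n) : Prop :=
  Function.Periodic γ 1 ∧ ContDiff ℝ 1 γ ∧ gagliardoSq σ (deriv γ) < ⊤

/-- The norm of `H^{1+σ,2}(ℝ/ℤ,ℝⁿ)`. -/
def H1Norm (σ : ℝ) (γ : ℝ → Rn n) : ℝ :=
  Real.sqrt (∫ u in Ioc (0:ℝ) 1, (‖γ u‖ ^ 2 + ‖deriv γ u‖ ^ 2)) +
    Real.sqrt ((gagliardoSq σ (deriv γ)).toReal)

/-- Membership of a 1-periodic map in `L²(ℝ/ℤ)`. -/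
def MemL2per {E : Type*} [NormedAddCommGroup E] (f : ℝ → E) : Prop :=
  Function.Periodic f 1 ∧ AEStronglyMeasurable f (volume : Measure ℝ) ∧
    IntegrableOn (fun u => ‖f u‖ ^ 2) (Ioc (0:ℝ) 1) volume

/-- Membership in the fractional Sobolev space `H^{s,2}(ℝ/ℤ)`, `s ∈ (0,1)`. -/
def MemHs0 (s : ℝ) {E : Type*} [NormedAddCommGroup E] (f : ℝ → E) : Prop :=
  MemL2per f ∧ gagliardoSq s f < ⊤

/-- The norm of `H^{s,2}(ℝ/ℤ)` for `s ∈ (0,1)`: `‖f‖_{L²} + [f]_{H^{s,2}}`. -/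
def Hs0Norm (s : ℝ) {E : Type*} [NormedAddCommGroup E] (f : ℝ → E) : ℝ :=
  Real.sqrt (∫ u in Ioc (0:ℝ) 1, ‖f u‖ ^ 2) + Real.sqrt ((gagliardoSq s f).toReal)

/-- The `k`-th Fourier coefficient (`j`-th component) of a 1-periodic curve. -/
def fCoef (γ : ℝ → Rn n) (k : ℤ) (j : Fin n) : ℂ :=
  ∫ u in (0:ℝ)..1, (γ u j : ℂ) * Complex.exp ((-2) * (Real.pi : ℂ) * Complex.I * (k : ℂ) * (u : ℂ))

/-- Membership in `H^{s,2}(ℝ/ℤ,ℝⁿ)` via the Fourier characterization: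
`((1+|k|²)^{s/2} γ̂(k))_k ∈ ℓ²`. -/
def MemHF (s : ℝ) (γ : ℝ → Rn n) : Prop :=
  Function.Periodic γ 1 ∧ Continuous γ ∧
    Summable (fun k : ℤ => (1 + (k : ℝ) ^ 2) ^ s * ∑ j, ‖fCoef γ k j‖ ^ 2)

/-- The squared Fourier norm of `H^{s,2}(ℝ/ℤ,ℝⁿ)`. -/
def fNormSq (s : ℝ) (γ : ℝ → Rn n) : ℝ :=
  ∑' k : ℤ, (1 + (k : ℝ) ^ 2) ^ s * ∑ j, ‖fCoef γ k j‖ ^ 2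

/-- C¹-norm of a 1-periodic map. -/
def c1Norm (f : ℝ → Rn n) : ℝ := ⨆ u : Icc (0:ℝ) 1, (‖f u.1‖ + ‖deriv f u.1‖)

/-- The integrand of `Q(γ,h)`. -/
def Qintegrand (α : ℝ) (γ h : ℝ → Rn n) (u w : ℝ) : ℝ :=
  ⟪deriv γ u, deriv h u⟫ / |w| ^ α
    - ⟪γ (u + w) - γ u, h (u + w) - h u⟫ / |w| ^ (α + 2)

/-- The integrand of `R(γ,h)`. -/
def Rintegrand (α : ℝ) (γ h : ℝ → Rn n) (u w : ℝ) : ℝ :=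
  2 * ⟪deriv γ u, deriv h u⟫ * (1 / ‖γ (u + w) - γ u‖ ^ α - 1 / |w| ^ α)
    - α * ⟪γ (u + w) - γ u, h (u + w) - h u⟫ *
        (1 / ‖γ (u + w) - γ u‖ ^ (α + 2) - 1 / |w| ^ (α + 2))

/-- `R(γ,h)`, an absolutely convergent double integral over `(ℝ/ℤ) × [−1/2,1/2]`. -/
def Rval (α : ℝ) (γ h : ℝ → Rn n) : ℝ :=
  ∫ p in (Ioc (0:ℝ) 1) ×ˢ (Icc (-(1:ℝ)/2) (1/2)), Rintegrand α γ h p.1 p.2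

/-!
The first and mixed second differences of `E^α` near `γ` are bounded by `C ‖h‖` and
`C ‖h‖ ‖k‖`. For such a function the dyadic difference quotients `2^m (F (γ + 2^{-m} h) - F γ)`
converge geometrically, and their limit is linear in `h`, is the Fréchet derivative, and is
Lipschitz in `γ`.

On a segment of parameter length `w` the chord `|∫ γ'|` and the arc `∫ |γ'|` have
`(∫ |γ'|)² - |∫ γ'|²` equal to `w²` times a difference of variances, of `γ'` and of `|γ'|`. Hence
the values and the first and mixed second differences along `γ + i h + j k` of the arc version of
the integrand are dominated by mean square oscillations of `γ'`, `h'` and `k'`, divided by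
`|w|^α`, and these are integrable by the Gagliardo seminorms. Replacing the arc in the integrand by
the shorter of the two arcs, which is not a smooth function of `γ`, costs a term whose
`w`-integral is explicit and depends smoothly on the length of `γ` and of its half arcs.
-/

/-! ### Mixed second differences -/

section SquareBound

variable {E F G : Type*} [NormedAddCommGroup E] [NormedAddCommGroup F] [NormedAddCommGroup G]

/-- A quantitative bound on a `2 × 2` array of values, thought of as `f i j = φ (x + i h + j k)`
with `a = ‖h‖` and `b = ‖k‖`: the values, the first differences in each direction and the mixed
second difference are bounded by `κ`, `κ a`, `κ b` and `κ a b`. -/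
structure SquareBound (κ a b : ℝ) (f : Bool → Bool → E) : Prop where
  norm_le : ∀ i j, ‖f i j‖ ≤ κ
  norm_fst_le : ∀ j, ‖f true j - f false j‖ ≤ κ * a
  norm_snd_le : ∀ i, ‖f i true - f i false‖ ≤ κ * b
  norm_mixed_le : ‖f true true - f true false - f false true + f false false‖ ≤ κ * a * b

section MixedDifference

variable [NormedSpace ℝ F] {g g' : ℝ → F} {s : Set ℝ} {C₁ C₂ δ x₀₀ x₀₁ x₁₀ x₁₁ : ℝ}

lemma norm_mixedDifference_comp_le (hs : Convex ℝ s) (hg : ∀ x ∈ s, HasDerivAt g (g' x) x)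
    (hbound : ∀ x ∈ s, ‖g' x‖ ≤ C₁) (hlip : ∀ x ∈ s, ∀ y ∈ s, ‖g' y - g' x‖ ≤ C₂ * ‖y - x‖)
    (hC₂ : 0 ≤ C₂) (h₀₀ : x₀₀ ∈ s) (h₀₁ : x₀₁ ∈ s) (h₁₀ : x₁₀ ∈ s) (h₁₁ : x₁₁ ∈ s)
    (hδ₀ : |x₁₀ - x₀₀| ≤ δ) (hδ₁ : |x₁₁ - x₀₁| ≤ δ) :
    ‖g x₁₁ - g x₁₀ - g x₀₁ + g x₀₀‖ ≤
      C₁ * |x₁₁ - x₁₀ - x₀₁ + x₀₀| + C₂ * δ * |x₀₁ - x₀₀| := by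
  let p : ℝ → ℝ := AffineMap.lineMap x₁₀ x₁₁
  let q : ℝ → ℝ := AffineMap.lineMap x₀₀ x₀₁
  have hderiv : ∀ θ ∈ Icc (0 : ℝ) 1, HasDerivAt (fun θ => g (p θ) - g (q θ))
      ((x₁₁ - x₁₀) • g' (p θ) - (x₀₁ - x₀₀) • g' (q θ)) θ := fun θ hθ =>
    ((hg _ (hs.lineMap_mem h₁₀ h₁₁ hθ)).scomp θ AffineMap.hasDerivAt_lineMap).sub
      ((hg _ (hs.lineMap_mem h₀₀ h₀₁ hθ)).scomp θ AffineMap.hasDerivAt_lineMap)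
  have hpq : ∀ θ ∈ Icc (0 : ℝ) 1, ‖p θ - q θ‖ ≤ δ := by
    rintro θ ⟨hθ₀, hθ₁⟩
    have hconv : p θ - q θ = (1 - θ) * (x₁₀ - x₀₀) + θ * (x₁₁ - x₀₁) := by
      simp only [p, q, AffineMap.lineMap_apply_ring]; ring
    rw [hconv, Real.norm_eq_abs]
    refine (abs_add_le _ _).trans ?_
    rw [abs_mul, abs_mul, abs_of_nonneg hθ₀, abs_of_nonneg (sub_nonneg.2 hθ₁)]
    nlinarith [mul_le_mul_of_nonneg_left hδ₀ (sub_nonneg.2 hθ₁),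
      mul_le_mul_of_nonneg_left hδ₁ hθ₀]
  have hderiv_le : ∀ θ ∈ Icc (0 : ℝ) 1, ‖(x₁₁ - x₁₀) • g' (p θ) - (x₀₁ - x₀₀) • g' (q θ)‖ ≤
      C₁ * |x₁₁ - x₁₀ - x₀₁ + x₀₀| + C₂ * δ * |x₀₁ - x₀₀| := by
    intro θ hθ
    have hp := hs.lineMap_mem h₁₀ h₁₁ hθ
    have hq := hs.lineMap_mem h₀₀ h₀₁ hθ
    calc ‖(x₁₁ - x₁₀) • g' (p θ) - (x₀₁ - x₀₀) • g' (q θ)‖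
        = ‖(x₁₁ - x₁₀ - x₀₁ + x₀₀) • g' (p θ) + (x₀₁ - x₀₀) • (g' (p θ) - g' (q θ))‖ := by
          congr 1; module
      _ ≤ |x₁₁ - x₁₀ - x₀₁ + x₀₀| * C₁ + |x₀₁ - x₀₀| * (C₂ * δ) := by
          refine norm_add_le_of_le ?_ ?_ <;> rw [norm_smul, Real.norm_eq_abs] <;> gcongr
          · exact hbound _ hp
          · exact (hlip _ hq _ hp).trans (by gcongr; exact hpq θ hθ)
      _ = _ := by ring
  have h := (convex_Icc (0 : ℝ) 1).norm_image_sub_le_of_norm_hasDerivWithin_le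
    (fun θ hθ => (hderiv θ hθ).hasDerivWithinAt) hderiv_le
    (left_mem_Icc.2 zero_le_one) (right_mem_Icc.2 zero_le_one)
  simp only [p, q, AffineMap.lineMap_apply_one, AffineMap.lineMap_apply_zero, sub_zero, norm_one,
    mul_one] at h
  convert h using 2
  abel

end MixedDifference

lemma exists_abs_rpow_le {m : ℝ} (p : ℝ) (hm : 0 < m) (M : ℝ) :
    ∃ C, ∀ x ∈ Icc m M, |x ^ p| ≤ C :=
  isCompact_Icc.exists_bound_of_continuousOn fun x hx =>
    (Real.continuousAt_rpow_const x p (.inl (hm.trans_le hx.1).ne')).continuousWithinAt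

namespace SquareBound

variable {κ κ' a b : ℝ}

lemma nonneg {f : Bool → Bool → E} (hf : SquareBound κ a b f) : 0 ≤ κ :=
  (norm_nonneg _).trans (hf.norm_le true true)

lemma mono {f : Bool → Bool → E} (hf : SquareBound κ a b f) (h : κ ≤ κ') (ha : 0 ≤ a)
    (hb : 0 ≤ b) : SquareBound κ' a b f where
  norm_le i j := (hf.norm_le i j).trans h
  norm_fst_le j := (hf.norm_fst_le j).trans (by gcongr)
  norm_snd_le i := (hf.norm_snd_le i).trans (by gcongr)
  norm_mixed_le := hf.norm_mixed_le.trans (by gcongr)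

lemma add {f g : Bool → Bool → E} (hf : SquareBound κ a b f) (hg : SquareBound κ' a b g) :
    SquareBound (κ + κ') a b (fun i j => f i j + g i j) where
  norm_le i j := norm_add_le_of_le (hf.norm_le i j) (hg.norm_le i j)
  norm_fst_le j := by
    rw [add_sub_add_comm, add_mul]
    exact norm_add_le_of_le (hf.norm_fst_le j) (hg.norm_fst_le j)
  norm_snd_le i := by
    rw [add_sub_add_comm, add_mul]
    exact norm_add_le_of_le (hf.norm_snd_le i) (hg.norm_snd_le i)
  norm_mixed_le := by
    rw [add_sub_add_comm, add_sub_add_comm, add_add_add_comm, add_mul, add_mul]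
    exact norm_add_le_of_le hf.norm_mixed_le hg.norm_mixed_le

lemma sub {f g : Bool → Bool → E} (hf : SquareBound κ a b f) (hg : SquareBound κ' a b g) :
    SquareBound (κ + κ') a b (fun i j => f i j - g i j) where
  norm_le i j := norm_sub_le_of_le (hf.norm_le i j) (hg.norm_le i j)
  norm_fst_le j := by
    rw [sub_sub_sub_comm, add_mul]
    exact norm_sub_le_of_le (hf.norm_fst_le j) (hg.norm_fst_le j)
  norm_snd_le i := by
    rw [sub_sub_sub_comm, add_mul]
    exact norm_sub_le_of_le (hf.norm_snd_le i) (hg.norm_snd_le i)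
  norm_mixed_le := by
    have regroup : f true true - g true true - (f true false - g true false)
          - (f false true - g false true) + (f false false - g false false)
        = (f true true - f true false - f false true + f false false)
          - (g true true - g true false - g false true + g false false) := by abel
    rw [regroup, add_mul, add_mul]
    exact norm_sub_le_of_le hf.norm_mixed_le hg.norm_mixed_le

variable [NormedSpace ℝ E] [NormedSpace ℝ F] [NormedSpace ℝ G]

lemma const_smul (c : ℝ) {f : Bool → Bool → E} (hf : SquareBound κ a b f) :
    SquareBound (|c| * κ) a b (fun i j => c • f i j) := by
  constructor <;> intros <;>
    simp only [← smul_sub, ← smul_add, norm_smul, Real.norm_eq_abs, mul_assoc |c|]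
  · gcongr; exact hf.norm_le _ _
  · gcongr; exact hf.norm_fst_le _
  · gcongr; exact hf.norm_snd_le _
  · gcongr; exact hf.norm_mixed_le

lemma bilin (B : E →L[ℝ] F →L[ℝ] G) (hB : ‖B‖ ≤ 1) {f : Bool → Bool → E} {g : Bool → Bool → F}
    (hf : SquareBound κ a b f) (hg : SquareBound κ' a b g) (ha : 0 ≤ a) (hb : 0 ≤ b) :
    SquareBound (4 * (κ * κ')) a b (fun i j => B (f i j) (g i j)) := by
  have hB' : ∀ {x y p q}, ‖x‖ ≤ p → ‖y‖ ≤ q → ‖B x y‖ ≤ p * q := fun hx hy =>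
    (B.le_of_opNorm₂_le_of_le hB hx hy).trans_eq (by ring)
  have hκκ' := mul_nonneg hf.nonneg hg.nonneg
  constructor
  · intro i j
    exact (hB' (hf.norm_le i j) (hg.norm_le i j)).trans (by linarith)
  · intro j
    have leibniz : B (f true j) (g true j) - B (f false j) (g false j)
        = B (f true j - f false j) (g true j) + B (f false j) (g true j - g false j) := by simp
    rw [leibniz]
    refine (norm_add_le_of_le (hB' (hf.norm_fst_le j) (hg.norm_le _ _))
      (hB' (hf.norm_le _ _) (hg.norm_fst_le j))).trans ?_
    nlinarith [mul_nonneg hκκ' ha]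
  · intro i
    have leibniz : B (f i true) (g i true) - B (f i false) (g i false)
        = B (f i true - f i false) (g i true) + B (f i false) (g i true - g i false) := by simp
    rw [leibniz]
    refine (norm_add_le_of_le (hB' (hf.norm_snd_le i) (hg.norm_le _ _))
      (hB' (hf.norm_le _ _) (hg.norm_snd_le i))).trans ?_
    nlinarith [mul_nonneg hκκ' hb]
  · have leibniz : B (f true true) (g true true) - B (f true false) (g true false)
          - B (f false true) (g false true) + B (f false false) (g false false)
        = B (f true true - f true false - f false true + f false false) (g true true)
          + B (f true false - f false false) (g true true - g true false)
          + B (f false true - f false false) (g true true - g false true)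
          + B (f false false) (g true true - g true false - g false true + g false false) := by
      simp only [map_sub, map_add, add_apply, sub_apply]
      abel
    rw [leibniz]
    refine (norm_add_le_of_le (norm_add_le_of_le (norm_add_le_of_le
      (hB' hf.norm_mixed_le (hg.norm_le _ _)) (hB' (hf.norm_fst_le _) (hg.norm_snd_le _)))
      (hB' (hf.norm_snd_le _) (hg.norm_fst_le _))) (hB' (hf.norm_le _ _) hg.norm_mixed_le)).trans_eq
      ?_
    ring

lemma mul {f g : Bool → Bool → ℝ} (hf : SquareBound κ a b f) (hg : SquareBound κ' a b g)
    (ha : 0 ≤ a) (hb : 0 ≤ b) :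
    SquareBound (4 * (κ * κ')) a b (fun i j => f i j * g i j) :=
  hf.bilin (.mul ℝ ℝ) (ContinuousLinearMap.opNorm_mul_le ℝ ℝ) hg ha hb

lemma inner {E : Type*} [NormedAddCommGroup E] [InnerProductSpace ℝ E] {f g : Bool → Bool → E}
    (hf : SquareBound κ a b f) (hg : SquareBound κ' a b g) (ha : 0 ≤ a) (hb : 0 ≤ b) :
    SquareBound (4 * (κ * κ')) a b (fun i j => ⟪f i j, g i j⟫) :=
  hf.bilin (innerSL ℝ) ((innerSL ℝ).opNorm_le_bound zero_le_one fun x => by simp) hg ha hb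

lemma integral {X : Type*} [MeasurableSpace X] {μ : Measure X} {f : Bool → Bool → X → E}
    {κ : X → ℝ} (hf : ∀ i j, Integrable (f i j) μ) (hκ : Integrable κ μ)
    (h : ∀ᵐ x ∂μ, SquareBound (κ x) a b (fun i j => f i j x)) :
    SquareBound (∫ x, κ x ∂μ) a b (fun i j => ∫ x, f i j x ∂μ) where
  norm_le i j := norm_integral_le_of_norm_le hκ (h.mono fun x hx => hx.norm_le i j)
  norm_fst_le j := by
    rw [← integral_sub (hf _ _) (hf _ _), ← integral_mul_const]
    exact norm_integral_le_of_norm_le (hκ.mul_const _) (h.mono fun x hx => hx.norm_fst_le j)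
  norm_snd_le i := by
    rw [← integral_sub (hf _ _) (hf _ _), ← integral_mul_const]
    exact norm_integral_le_of_norm_le (hκ.mul_const _) (h.mono fun x hx => hx.norm_snd_le i)
  norm_mixed_le := by
    have h₁ := (hf true true).sub (hf true false)
    rw [← integral_sub' (hf _ _) (hf _ _), ← integral_sub' h₁ (hf _ _),
      ← integral_add' (h₁.sub (hf _ _)) (hf _ _), ← integral_mul_const, ← integral_mul_const]
    exact norm_integral_le_of_norm_le ((hκ.mul_const _).mul_const _)
      (h.mono fun x hx => hx.norm_mixed_le)

lemma intervalIntegral {x y : ℝ} (hxy : x ≤ y) {f : Bool → Bool → ℝ → E} {κ : ℝ → ℝ}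
    (hf : ∀ i j, IntervalIntegrable (f i j) volume x y) (hκ : IntervalIntegrable κ volume x y)
    (h : ∀ t ∈ Icc x y, SquareBound (κ t) a b (fun i j => f i j t)) :
    SquareBound (∫ t in x..y, κ t) a b (fun i j => ∫ t in x..y, f i j t) := by
  simp only [intervalIntegral.integral_of_le hxy]
  exact integral (fun i j => (hf i j).1) hκ.1
    ((ae_restrict_iff' measurableSet_Ioc).2 (ae_of_all _ fun t ht => h t (Ioc_subset_Icc_self ht)))

lemma comp {g g' g'' : ℝ → F} {s : Set ℝ} (hs : Convex ℝ s) {C : ℝ}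
    (hg : ∀ x ∈ s, HasDerivAt g (g' x) x) (hg' : ∀ x ∈ s, HasDerivAt g' (g'' x) x)
    (hC₀ : ∀ x ∈ s, ‖g x‖ ≤ C) (hC₁ : ∀ x ∈ s, ‖g' x‖ ≤ C) (hC₂ : ∀ x ∈ s, ‖g'' x‖ ≤ C)
    {f : Bool → Bool → ℝ} (hf : SquareBound κ a b f) (hfs : ∀ i j, f i j ∈ s)
    (ha : 0 ≤ a) (hb : 0 ≤ b) :
    SquareBound (C * (1 + κ) ^ 2) a b (fun i j => g (f i j)) := by
  have hκ := hf.nonneg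
  have hC : 0 ≤ C := (norm_nonneg _).trans (hC₀ _ (hfs true true))
  have hlip : ∀ x ∈ s, ∀ y ∈ s, ‖g y - g x‖ ≤ C * ‖y - x‖ := fun x hx y hy =>
    hs.norm_image_sub_le_of_norm_hasDerivWithin_le
      (fun z hz => (hg z hz).hasDerivWithinAt) hC₁ hx hy
  have hlip' : ∀ x ∈ s, ∀ y ∈ s, ‖g' y - g' x‖ ≤ C * ‖y - x‖ := fun x hx y hy =>
    hs.norm_image_sub_le_of_norm_hasDerivWithin_le
      (fun z hz => (hg' z hz).hasDerivWithinAt) hC₂ hx hy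
  constructor
  · exact fun i j => (hC₀ _ (hfs i j)).trans (le_mul_of_one_le_right hC (by nlinarith))
  · intro j
    calc ‖g (f true j) - g (f false j)‖ ≤ C * ‖f true j - f false j‖ :=
          hlip _ (hfs _ _) _ (hfs _ _)
      _ ≤ C * ((1 + κ) ^ 2 * a) := by
          gcongr; exact (hf.norm_fst_le j).trans (by gcongr; nlinarith)
      _ = _ := by ring
  · intro i
    calc ‖g (f i true) - g (f i false)‖ ≤ C * ‖f i true - f i false‖ :=
          hlip _ (hfs _ _) _ (hfs _ _)
      _ ≤ C * ((1 + κ) ^ 2 * b) := by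
          gcongr; exact (hf.norm_snd_le i).trans (by gcongr; nlinarith)
      _ = _ := by ring
  · calc ‖g (f true true) - g (f true false) - g (f false true) + g (f false false)‖
        ≤ C * |f true true - f true false - f false true + f false false|
          + C * (κ * a) * |f false true - f false false| :=
          norm_mixedDifference_comp_le hs hg hC₁ hlip' hC (hfs _ _) (hfs _ _) (hfs _ _) (hfs _ _)
            (hf.norm_fst_le false) (hf.norm_fst_le true)
      _ ≤ C * (κ * a * b) + C * (κ * a) * (κ * b) := by
          gcongr
          · exact hf.norm_mixed_le
          · exact hf.norm_snd_le false
      _ = C * (κ + κ ^ 2) * a * b := by ring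
      _ ≤ _ := by gcongr; nlinarith

/-- The mean value formula `g y - g x = (y - x) ∫₀¹ g'(x + θ (y - x)) dθ` passes the factor `δ`
on. -/
lemma comp_sub_comp {g g' : ℝ → ℝ} {s : Set ℝ} (hs : Convex ℝ s) {C δ : ℝ}
    (hg : ∀ x ∈ s, HasDerivAt g (g' x) x) (hg'c : ContinuousOn g' s)
    (hg' : ∀ f : Bool → Bool → ℝ, SquareBound (3 * κ) a b f → (∀ i j, f i j ∈ s) →
      SquareBound C a b (fun i j => g' (f i j)))
    {f₁ f₂ : Bool → Bool → ℝ} (hf₁ : SquareBound κ a b f₁) (hf₂ : SquareBound κ a b f₂)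
    (hδ : SquareBound δ a b (fun i j => f₁ i j - f₂ i j)) (hs₁ : ∀ i j, f₁ i j ∈ s)
    (hs₂ : ∀ i j, f₂ i j ∈ s) (ha : 0 ≤ a) (hb : 0 ≤ b) :
    SquareBound (4 * (δ * C)) a b (fun i j => g (f₁ i j) - g (f₂ i j)) := by
  let p : Bool → Bool → ℝ → ℝ := fun i j θ => f₂ i j + θ * (f₁ i j - f₂ i j)
  have hp : ∀ i j, ∀ θ ∈ Icc (0 : ℝ) 1, p i j θ ∈ s := fun i j θ hθ => by
    simpa only [p, smul_eq_mul] using hs.add_smul_sub_mem (hs₂ i j) (hs₁ i j) hθ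
  have hint : ∀ i j, IntervalIntegrable (fun θ => (f₁ i j - f₂ i j) * g' (p i j θ)) volume 0 1 :=
    fun i j => ContinuousOn.intervalIntegrable <| by
      rw [uIcc_of_le zero_le_one]
      exact continuousOn_const.mul (hg'c.comp (by fun_prop) (hp i j))
  have mean_value : ∀ i j, g (f₁ i j) - g (f₂ i j)
      = ∫ θ in (0 : ℝ)..1, (f₁ i j - f₂ i j) * g' (p i j θ) := fun i j => by
    have hderiv : ∀ θ ∈ uIcc (0 : ℝ) 1,
        HasDerivAt (fun θ => g (p i j θ)) ((f₁ i j - f₂ i j) * g' (p i j θ)) θ := fun θ hθ => by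
      rw [uIcc_of_le zero_le_one] at hθ
      rw [mul_comm]
      refine (hg _ (hp i j θ hθ)).comp θ ?_
      exact (((hasDerivAt_id θ).mul_const (f₁ i j - f₂ i j)).const_add (f₂ i j)).congr_deriv
        (one_mul _)
    rw [intervalIntegral.integral_eq_sub_of_hasDerivAt hderiv (hint i j)]
    simp [p]
  have hpθ : ∀ θ ∈ Icc (0 : ℝ) 1, SquareBound (3 * κ) a b (fun i j => p i j θ) := fun θ hθ => by
    refine (hf₂.add ((hf₁.sub hf₂).const_smul θ)).mono ?_ ha hb
    rw [abs_of_nonneg hθ.1]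
    nlinarith [hθ.2, hf₁.nonneg]
  simp only [mean_value]
  simpa using intervalIntegral (κ := fun _ => 4 * (δ * C)) zero_le_one hint (by simp)
    fun θ hθ => hδ.mul (hg' _ (hpθ θ hθ) fun i j => hp i j θ hθ) ha hb

section Rpow

variable {m : ℝ} (p : ℝ) (hm : 0 < m) (M : ℝ)
include hm

lemma exists_rpow (κ : ℝ) : ∃ C, 0 ≤ C ∧ ∀ {a b : ℝ} {f : Bool → Bool → ℝ}, 0 ≤ a → 0 ≤ b →
    SquareBound κ a b f → (∀ i j, f i j ∈ Icc m M) → SquareBound C a b (fun i j => f i j ^ p) := by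
  obtain ⟨C₀, hC₀⟩ := exists_abs_rpow_le p hm M
  obtain ⟨C₁, hC₁⟩ := exists_abs_rpow_le (p - 1) hm M
  obtain ⟨C₂, hC₂⟩ := exists_abs_rpow_le (p - 1 - 1) hm M
  let C := max (max |C₀| (|p| * |C₁|)) (|p| * (|p - 1| * |C₂|))
  have pos : ∀ x ∈ Icc m M, x ≠ 0 := fun x hx => (hm.trans_le hx.1).ne'
  refine ⟨C * (1 + κ) ^ 2, by positivity, fun ha hb hf hfm =>
    hf.comp (g' := fun x => p * x ^ (p - 1)) (g'' := fun x => p * ((p - 1) * x ^ (p - 1 - 1)))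
      (convex_Icc m M) (fun x hx => Real.hasDerivAt_rpow_const (.inl (pos x hx)))
      (fun x hx => (Real.hasDerivAt_rpow_const (.inl (pos x hx))).const_mul p)
      (fun x hx => ?_) (fun x hx => ?_) (fun x hx => ?_) hfm ha hb⟩
  · exact ((hC₀ x hx).trans (le_abs_self _)).trans ((le_max_left _ _).trans (le_max_left _ _))
  · rw [norm_mul, Real.norm_eq_abs, Real.norm_eq_abs]
    exact (mul_le_mul_of_nonneg_left ((hC₁ x hx).trans (le_abs_self _)) (abs_nonneg _)).trans
      ((le_max_right _ _).trans (le_max_left _ _))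
  · rw [norm_mul, norm_mul, Real.norm_eq_abs, Real.norm_eq_abs, Real.norm_eq_abs]
    exact (mul_le_mul_of_nonneg_left (mul_le_mul_of_nonneg_left
      ((hC₂ x hx).trans (le_abs_self _)) (abs_nonneg _)) (abs_nonneg _)).trans (le_max_right _ _)

lemma exists_rpow_sub_rpow (κ : ℝ) : ∃ C, 0 ≤ C ∧ ∀ {a b δ : ℝ} {f₁ f₂ : Bool → Bool → ℝ},
    0 ≤ a → 0 ≤ b → SquareBound κ a b f₁ → SquareBound κ a b f₂ →
    SquareBound δ a b (fun i j => f₁ i j - f₂ i j) →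
    (∀ i j, f₁ i j ∈ Icc m M) → (∀ i j, f₂ i j ∈ Icc m M) →
    SquareBound (C * δ) a b (fun i j => f₁ i j ^ p - f₂ i j ^ p) := by
  obtain ⟨C, hC, hrpow⟩ := exists_rpow (p - 1) hm M (3 * κ)
  have ne : ∀ x ∈ Icc m M, x ≠ 0 := fun x hx => (hm.trans_le hx.1).ne'
  refine ⟨4 * (|p| * C), by positivity, fun ha hb hf₁ hf₂ hδ hm₁ hm₂ => ?_⟩
  have h := comp_sub_comp (convex_Icc m M)
    (fun x hx => Real.hasDerivAt_rpow_const (p := p) (.inl (ne x hx)))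
    (continuousOn_const.mul fun x hx =>
      (Real.continuousAt_rpow_const x _ (.inl (ne x hx))).continuousWithinAt)
    (fun f hf hfm => (hrpow ha hb hf hfm).const_smul p) hf₁ hf₂ hδ hm₁ hm₂ ha hb
  exact h.mono (by linarith) ha hb

end Rpow

end SquareBound

end SquareBound

/-! ### The chord-arc defect of a segment -/

section Segment

variable {E : Type*} [NormedAddCommGroup E] [InnerProductSpace ℝ E]

lemma norm_rpow_eq_inner_self_rpow (p : ℝ) (x : E) : ‖x‖ ^ p = ⟪x, x⟫ ^ (p / 2) := by
  rw [real_inner_self_eq_norm_sq, ← Real.rpow_natCast_mul (norm_nonneg _)]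
  congr 1; push_cast; ring

lemma norm_eq_inner_self_rpow (x : E) : ‖x‖ = ⟪x, x⟫ ^ (1 / 2 : ℝ) := by
  rw [← norm_rpow_eq_inner_self_rpow, Real.rpow_one]

lemma inner_self_mem_Icc {c M : ℝ} {x : E} (hc : 0 ≤ c) (hcx : c ≤ ‖x‖) (hxM : ‖x‖ ≤ M) :
    ⟪x, x⟫ ∈ Icc (c ^ 2) (M ^ 2) := by
  rw [real_inner_self_eq_norm_sq]
  exact ⟨pow_le_pow_left₀ hc hcx 2, pow_le_pow_left₀ (norm_nonneg _) hxM 2⟩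

/-- The variance of `f` under the uniform distribution on `[0, 1]`, as the second moment minus the
square of the mean. -/
def unitVariance (f : ℝ → E) : ℝ :=
  (∫ s in (0 : ℝ)..1, ⟪f s, f s⟫) - ⟪∫ s in (0 : ℝ)..1, f s, ∫ s in (0 : ℝ)..1, f s⟫

section UnitVariance

variable [CompleteSpace E] {f : ℝ → E}

lemma unitVariance_sub_const (hf : Continuous f) (c : E) :
    unitVariance (fun s => f s - c) = unitVariance f := by
  have mean : ∫ s in (0 : ℝ)..1, (f s - c) = (∫ s in (0 : ℝ)..1, f s) - c := by
    rw [intervalIntegral.integral_sub (hf.intervalIntegrable _ _) (by simp)]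
    simp
  have mean_inner : ∫ s in (0 : ℝ)..1, ⟪c, f s⟫ = ⟪c, ∫ s in (0 : ℝ)..1, f s⟫ :=
    (innerSL ℝ c).intervalIntegral_comp_comm (hf.intervalIntegrable 0 1)
  have second_moment : ∫ s in (0 : ℝ)..1, ⟪f s - c, f s - c⟫
      = (∫ s in (0 : ℝ)..1, ⟪f s, f s⟫) - 2 * ⟪c, ∫ s in (0 : ℝ)..1, f s⟫ + ⟪c, c⟫ := by
    simp only [real_inner_sub_sub_self, real_inner_comm c]
    rw [intervalIntegral.integral_add, intervalIntegral.integral_sub,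
      intervalIntegral.integral_const_mul, mean_inner]
    · simp
    all_goals exact Continuous.intervalIntegrable (by fun_prop) _ _
  rw [unitVariance, unitVariance, second_moment, mean, real_inner_sub_sub_self,
    real_inner_comm c (∫ s in (0 : ℝ)..1, f s)]
  ring

lemma unitVariance_nonneg (hf : Continuous f) : 0 ≤ unitVariance f := by
  rw [← unitVariance_sub_const hf (∫ s in (0 : ℝ)..1, f s), unitVariance,
    intervalIntegral.integral_sub (hf.intervalIntegrable _ _) (by simp)]
  simpa using intervalIntegral.integral_nonneg zero_le_one fun s _ => real_inner_self_nonneg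

lemma sq_integral_unit_le {d : ℝ → ℝ} (hd : Continuous d) :
    (∫ s in (0 : ℝ)..1, d s) ^ 2 ≤ ∫ s in (0 : ℝ)..1, d s ^ 2 := by
  simpa [unitVariance, ← pow_two] using unitVariance_nonneg hd

end UnitVariance

lemma inner_integral_sub_sq_integral_norm (v : ℝ → E) :
    ⟪∫ s in (0 : ℝ)..1, v s, ∫ s in (0 : ℝ)..1, v s⟫ - (∫ s in (0 : ℝ)..1, ‖v s‖) ^ 2
      = unitVariance (fun s => ‖v s‖) - unitVariance v := by
  simp only [unitVariance, real_inner_self_eq_norm_sq, Real.norm_eq_abs, sq_abs]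
  ring

namespace SquareBound

lemma unitVariance_of_osc [CompleteSpace E] {a b : ℝ} {d : ℝ → ℝ} {v : Bool → Bool → ℝ → E}
    (ha : 0 ≤ a) (hb : 0 ≤ b) (hv : ∀ i j, Continuous (v i j)) (hd : Continuous d)
    (h : ∀ s ∈ Icc (0 : ℝ) 1, SquareBound (d s) a b (fun i j => v i j s - v i j 0)) :
    SquareBound (8 * ∫ s in (0 : ℝ)..1, d s ^ 2) a b (fun i j => unitVariance (v i j)) := by
  have shift : ∀ i j, unitVariance (v i j) = unitVariance (fun s => v i j s - v i j 0) :=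
    fun i j => (unitVariance_sub_const (hv i j) _).symm
  simp only [shift]
  simp only [unitVariance]
  have second_moment := intervalIntegral (κ := fun s => 4 * (d s * d s)) zero_le_one
    (fun i j => Continuous.intervalIntegrable (by fun_prop) _ _)
    (Continuous.intervalIntegrable (by fun_prop) _ _)
    fun s hs => (h s hs).inner (h s hs) ha hb
  have mean := intervalIntegral zero_le_one
    (fun i j => Continuous.intervalIntegrable (by fun_prop) _ _) (hd.intervalIntegrable _ _) h
  refine (second_moment.sub (mean.inner mean ha hb)).mono ?_ ha hb
  simp only [intervalIntegral.integral_const_mul, ← pow_two]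
  linarith [sq_integral_unit_le hd]

lemma inner_self_sub_inner_self {a b M δ : ℝ} {v w : Bool → Bool → E} (ha : 0 ≤ a) (hb : 0 ≤ b)
    (hv : SquareBound M a b v) (hw : SquareBound M a b w)
    (hδ : SquareBound δ a b (fun i j => v i j - w i j)) :
    SquareBound (8 * M * δ) a b (fun i j => ⟪v i j, v i j⟫ - ⟪w i j, w i j⟫) := by
  have h := (hδ.inner hv ha hb).add (hw.inner hδ ha hb)
  simp only [inner_sub_left, inner_sub_right, sub_add_sub_cancel] at h
  convert h using 1
  ring

section Norm

variable {c : ℝ} (hc : 0 < c) (M : ℝ)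
include hc

variable (E) in
lemma exists_norm : ∃ C, 0 ≤ C ∧ ∀ {a b : ℝ} {v : Bool → Bool → E}, 0 ≤ a → 0 ≤ b →
    SquareBound M a b v → (∀ i j, c ≤ ‖v i j‖) → SquareBound C a b (fun i j => ‖v i j‖) := by
  obtain ⟨C, hC, hrpow⟩ := exists_rpow (1 / 2) (pow_pos hc 2) (M ^ 2) (4 * (M * M))
  refine ⟨C, hC, fun ha hb hv hcv => ?_⟩
  simp only [norm_eq_inner_self_rpow]
  exact hrpow ha hb (hv.inner hv ha hb) fun i j =>
    inner_self_mem_Icc hc.le (hcv i j) (hv.norm_le i j)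

variable (E) in
lemma exists_norm_sub_norm : ∃ K, 0 ≤ K ∧ ∀ {a b δ : ℝ} {v w : Bool → Bool → E}, 0 ≤ a → 0 ≤ b →
    SquareBound M a b v → SquareBound M a b w → SquareBound δ a b (fun i j => v i j - w i j) →
    (∀ i j, c ≤ ‖v i j‖) → (∀ i j, c ≤ ‖w i j‖) →
    SquareBound (K * δ) a b (fun i j => ‖v i j‖ - ‖w i j‖) := by
  obtain ⟨C, hC, hrpow⟩ := exists_rpow_sub_rpow (1 / 2) (pow_pos hc 2) (M ^ 2) (4 * (M * M))
  refine ⟨C * (8 * |M|), by positivity, fun ha hb hv hw hδ hcv hcw => ?_⟩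
  simp only [norm_eq_inner_self_rpow, abs_of_nonneg hv.nonneg, mul_assoc]
  exact hrpow ha hb (hv.inner hv ha hb) (hw.inner hw ha hb)
    ((inner_self_sub_inner_self ha hb hv hw hδ).mono (by linarith) ha hb)
    (fun i j => inner_self_mem_Icc hc.le (hcv i j) (hv.norm_le i j))
    (fun i j => inner_self_mem_Icc hc.le (hcw i j) (hw.norm_le i j))

end Norm

end SquareBound

/-- Bounds on a `2 × 2` array of velocity fields along a segment parametrized by `[0, 1]`, with
mixed second differences controlled as in `SquareBound`: `c` and `M` bound the speeds, `c` also
bounds the chords from below, and `d` controls the oscillation of the velocities. -/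
structure SegmentBound (c M a b : ℝ) (d : ℝ → ℝ) (v : Bool → Bool → ℝ → E) : Prop where
  nonneg_fst : 0 ≤ a
  nonneg_snd : 0 ≤ b
  continuous : ∀ i j, Continuous (v i j)
  continuous_osc : Continuous d
  velocity : ∀ s ∈ Icc (0 : ℝ) 1, SquareBound M a b (fun i j => v i j s)
  osc : ∀ s ∈ Icc (0 : ℝ) 1, SquareBound (d s) a b (fun i j => v i j s - v i j 0)
  le_norm : ∀ i j, ∀ s ∈ Icc (0 : ℝ) 1, c ≤ ‖v i j s‖
  le_norm_integral : ∀ i j, c ≤ ‖∫ s in (0 : ℝ)..1, v i j s‖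

namespace SegmentBound

variable {c M a b : ℝ} {d : ℝ → ℝ} {v : Bool → Bool → ℝ → E}

lemma chord (h : SegmentBound c M a b d v) :
    SquareBound M a b (fun i j => ∫ s in (0 : ℝ)..1, v i j s) := by
  simpa using SquareBound.intervalIntegral (κ := fun _ => M) zero_le_one
    (fun i j => (h.continuous i j).intervalIntegrable _ _) (by simp) h.velocity

lemma integral_norm_le (h : SegmentBound c M a b d v) (i j : Bool) :
    ∫ s in (0 : ℝ)..1, ‖v i j s‖ ≤ M := by
  simpa using intervalIntegral.integral_mono_on (μ := volume) zero_le_one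
    ((h.continuous i j).norm.intervalIntegrable 0 1) (by simp)
    (fun s hs => (h.velocity s hs).norm_le i j)

lemma norm_integral_le (h : SegmentBound c M a b d v) (i j : Bool) :
    ‖∫ s in (0 : ℝ)..1, v i j s‖ ≤ M :=
  (intervalIntegral.norm_integral_le_integral_norm zero_le_one).trans (h.integral_norm_le i j)

lemma le_integral_norm (h : SegmentBound c M a b d v) (i j : Bool) :
    c ≤ ∫ s in (0 : ℝ)..1, ‖v i j s‖ :=
  (h.le_norm_integral i j).trans (intervalIntegral.norm_integral_le_integral_norm zero_le_one)

variable (E) (hc : 0 < c) (M)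
include hc

lemma exists_squareBound_integral_norm : ∃ C, 0 ≤ C ∧ ∀ {a b : ℝ} {d : ℝ → ℝ}
    {v : Bool → Bool → ℝ → E}, SegmentBound c M a b d v →
    SquareBound C a b (fun i j => ∫ s in (0 : ℝ)..1, ‖v i j s‖) := by
  obtain ⟨C, hC, hnorm⟩ := SquareBound.exists_norm E hc M
  refine ⟨C, hC, fun h => ?_⟩
  simpa using SquareBound.intervalIntegral (κ := fun _ => C) zero_le_one
    (fun i j => (h.continuous i j).norm.intervalIntegrable _ _) (by simp)
    fun s hs => hnorm h.nonneg_fst h.nonneg_snd (h.velocity s hs) fun i j => h.le_norm i j s hs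

lemma exists_squareBound_defect [CompleteSpace E] : ∃ C, 0 ≤ C ∧ ∀ {a b : ℝ} {d : ℝ → ℝ}
    {v : Bool → Bool → ℝ → E}, SegmentBound c M a b d v →
    SquareBound (C * ∫ s in (0 : ℝ)..1, d s ^ 2) a b (fun i j =>
      ⟪∫ s in (0 : ℝ)..1, v i j s, ∫ s in (0 : ℝ)..1, v i j s⟫
        - (∫ s in (0 : ℝ)..1, ‖v i j s‖) ^ 2) := by
  obtain ⟨K, -, hnorm⟩ := SquareBound.exists_norm_sub_norm E hc M
  refine ⟨8 * K ^ 2 + 8, by positivity, fun h => ?_⟩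
  have h₀ : (0 : ℝ) ∈ Icc (0 : ℝ) 1 := left_mem_Icc.2 zero_le_one
  have ha := h.nonneg_fst
  have hb := h.nonneg_snd
  have speed_osc := fun s hs => hnorm ha hb (h.velocity s hs) (h.velocity 0 h₀) (h.osc s hs)
    (fun i j => h.le_norm i j s hs) (fun i j => h.le_norm i j 0 h₀)
  simp only [inner_integral_sub_sq_integral_norm]
  have speeds := SquareBound.unitVariance_of_osc ha hb (fun i j => (h.continuous i j).norm)
    (h.continuous_osc.const_mul K) speed_osc
  have velocities := SquareBound.unitVariance_of_osc ha hb h.continuous h.continuous_osc h.osc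
  refine (speeds.sub velocities).mono (le_of_eq ?_) ha hb
  simp only [mul_pow, intervalIntegral.integral_const_mul]
  ring

lemma exists_squareBound_rpow_defect [CompleteSpace E] (p : ℝ) : ∃ C, 0 ≤ C ∧ ∀ {a b : ℝ}
    {d : ℝ → ℝ} {v : Bool → Bool → ℝ → E}, SegmentBound c M a b d v →
    SquareBound (C * ∫ s in (0 : ℝ)..1, d s ^ 2) a b (fun i j =>
      ‖∫ s in (0 : ℝ)..1, v i j s‖ ^ p - (∫ s in (0 : ℝ)..1, ‖v i j s‖) ^ p) := by
  obtain ⟨C₁, -, harc⟩ := exists_squareBound_integral_norm E M hc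
  obtain ⟨C₂, hC₂, hdefect⟩ := exists_squareBound_defect E M hc
  obtain ⟨C, hC, hrpow⟩ := SquareBound.exists_rpow_sub_rpow (p / 2) (pow_pos hc 2) (M ^ 2)
    (max (4 * (M * M)) (4 * (C₁ * C₁)))
  refine ⟨C * C₂, by positivity, fun {a b d v} h => ?_⟩
  have ha := h.nonneg_fst
  have hb := h.nonneg_snd
  have arc := harc h
  have arc_nonneg := fun i j => hc.le.trans (h.le_integral_norm i j)
  have arc_rpow : ∀ i j, (∫ s in (0 : ℝ)..1, ‖v i j s‖) ^ p
      = ((∫ s in (0 : ℝ)..1, ‖v i j s‖) ^ 2) ^ (p / 2) := fun i j => by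
    rw [← Real.rpow_natCast_mul (arc_nonneg i j)]
    congr 1; push_cast; ring
  simp only [norm_rpow_eq_inner_self_rpow p, arc_rpow, mul_assoc]
  refine hrpow ha hb ((h.chord.inner h.chord ha hb).mono (le_max_left _ _) ha hb) ?_ (hdefect h)
    (fun i j => inner_self_mem_Icc hc.le (h.le_norm_integral i j) (h.norm_integral_le i j))
    (fun i j => ⟨pow_le_pow_left₀ hc.le (h.le_integral_norm i j) 2,
      pow_le_pow_left₀ (arc_nonneg i j) (h.integral_norm_le i j) 2⟩)
  simpa only [pow_two] using (arc.mul arc ha hb).mono (le_max_right _ _) ha hb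

lemma exists_squareBound_energy [CompleteSpace E] (p : ℝ) : ∃ C, 0 ≤ C ∧ ∀ {a b : ℝ}
    {d : ℝ → ℝ} {v : Bool → Bool → ℝ → E}, SegmentBound c M a b d v →
    SquareBound (C * ∫ s in (0 : ℝ)..1, d s ^ 2) a b (fun i j =>
      (‖∫ s in (0 : ℝ)..1, v i j s‖ ^ p - (∫ s in (0 : ℝ)..1, ‖v i j s‖) ^ p)
        * (‖v i j 0‖ * ‖v i j 1‖)) := by
  obtain ⟨C₁, -, hnorm⟩ := SquareBound.exists_norm E hc M
  obtain ⟨C₂, hC₂, hdefect⟩ := exists_squareBound_rpow_defect E M hc p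
  refine ⟨16 * C₁ ^ 2 * C₂, by positivity, fun h => ?_⟩
  have ha := h.nonneg_fst
  have hb := h.nonneg_snd
  have speed : ∀ s ∈ Icc (0 : ℝ) 1, SquareBound C₁ _ _ (fun i j => ‖_‖) := fun s hs =>
    hnorm ha hb (h.velocity s hs) fun i j => h.le_norm i j s hs
  have speeds := (speed 0 (left_mem_Icc.2 zero_le_one)).mul
    (speed 1 (right_mem_Icc.2 zero_le_one)) ha hb
  exact ((hdefect h).mul speeds ha hb).mono (by linarith) ha hb

end SegmentBound

end Segment

/-! ### Differentiability from second differences -/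

section SecondDifference

variable {V : Type*} [AddCommGroup V] [Module ℝ V]

/-- The dyadic difference quotient `2 ^ m * (F (γ + 2 ^ (-m) h) - F γ)`. -/
def dyadicQuot (F : V → ℝ) (γ h : V) (m : ℕ) : ℝ :=
  2 ^ m * (F (γ + ((2 : ℝ) ^ m)⁻¹ • h) - F γ)

/-- The directional derivative of `F` at `γ`, as the limit of the dyadic difference quotients
(a junk value if they diverge). -/
def dyadicDeriv (F : V → ℝ) (γ h : V) : ℝ := limUnder atTop (dyadicQuot F γ h)

/-- `N` is nonnegative and absolutely homogeneous on `S`: a seminorm, except possibly for the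
triangle inequality. -/
structure IsAbsHomogeneousOn (S : Submodule ℝ V) (N : V → ℝ) : Prop where
  nonneg : ∀ h ∈ S, 0 ≤ N h
  smul : ∀ (c : ℝ), ∀ h ∈ S, N (c • h) = |c| * N h

/-- The first and mixed second differences of `F` based at `γ`, with increments in `S` of size
less than `r`, are bounded by `C`. -/
structure HasBoundedDifferences (S : Submodule ℝ V) (N F : V → ℝ) (γ : V) (r C : ℝ) :
    Prop where
  pos : 0 < r
  abs_fst_le : ∀ h ∈ S, N h < r → |F (γ + h) - F γ| ≤ C * N h
  abs_snd_le : ∀ h ∈ S, ∀ k ∈ S, N h < r → N k < r →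
    |F (γ + h + k) - F (γ + h) - F (γ + k) + F γ| ≤ C * (N h * N k)

variable {S : Submodule ℝ V} {N F : V → ℝ} {γ h k : V} {r C : ℝ}

namespace IsAbsHomogeneousOn

lemma dyadic_smul (hN : IsAbsHomogeneousOn S N) (hh : h ∈ S) (m : ℕ) :
    N (((2 : ℝ) ^ m)⁻¹ • h) = ((2 : ℝ) ^ m)⁻¹ * N h := by
  rw [hN.smul _ h hh, abs_of_nonneg (by positivity)]

lemma eventually_dyadic_smul_lt (hN : IsAbsHomogeneousOn S N) (hr : 0 < r) (hh : h ∈ S) :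
    ∀ᶠ m : ℕ in atTop, N (((2 : ℝ) ^ m)⁻¹ • h) < r := by
  have hlim : Tendsto (fun m : ℕ => ((2 : ℝ) ^ m)⁻¹ * N h) atTop (𝓝 (0 * N h)) := by
    refine Tendsto.mul_const _ ?_
    simp only [← inv_pow]
    exact tendsto_pow_atTop_nhds_zero_of_lt_one (by norm_num) (by norm_num)
  rw [zero_mul] at hlim
  filter_upwards [hlim.eventually (gt_mem_nhds hr)] with m hm
  rwa [hN.dyadic_smul hh]

end IsAbsHomogeneousOn

lemma exists_pos_mul_le (C : ℝ) {η : ℝ} (hη : 0 < η) :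
    ∃ r > 0, ∀ x, 0 ≤ x → x < r → C * x ≤ η := by
  refine ⟨η / (|C| + 1), by positivity, fun x h0 hx => ?_⟩
  rw [lt_div_iff₀ (by positivity)] at hx
  nlinarith [le_abs_self C]

namespace HasBoundedDifferences

lemma dist_dyadicQuot_succ_le (hF : HasBoundedDifferences S N F γ r C)
    (hN : IsAbsHomogeneousOn S N) (hh : h ∈ S) (hr : N h < r) (m : ℕ) :
    dist (dyadicQuot F γ h m) (dyadicQuot F γ h (m + 1)) ≤ C * N h ^ 2 / 4 / 2 ^ m := by
  set x := ((2 : ℝ) ^ (m + 1))⁻¹ • h with hx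
  have hxS : x ∈ S := S.smul_mem _ hh
  have hxN : N x = ((2 : ℝ) ^ (m + 1))⁻¹ * N h := hN.dyadic_smul hh _
  have hxr : N x < r := by
    rw [hxN]
    refine (mul_le_of_le_one_left (hN.nonneg h hh) ?_).trans_lt hr
    exact inv_le_one_of_one_le₀ (one_le_pow₀ one_le_two)
  have doubling : ((2 : ℝ) ^ m)⁻¹ • h = x + x := by
    rw [hx, ← add_smul]; congr 1; rw [pow_succ]; field_simp; norm_num
  have quot_sub : dyadicQuot F γ h m - dyadicQuot F γ h (m + 1)
      = 2 ^ m * (F (γ + x + x) - F (γ + x) - F (γ + x) + F γ) := by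
    rw [dyadicQuot, dyadicQuot, doubling, ← hx, ← add_assoc]; ring
  rw [Real.dist_eq, quot_sub, abs_mul, abs_of_nonneg (by positivity : (0 : ℝ) ≤ 2 ^ m)]
  calc _ ≤ (2 : ℝ) ^ m * (C * (N x * N x)) := by
        gcongr; exact hF.abs_snd_le x hxS x hxS hxr hxr
    _ = C * N h ^ 2 / 4 / 2 ^ m := by rw [hxN, pow_succ]; field_simp; ring

lemma exists_tendsto_of_lt (hF : HasBoundedDifferences S N F γ r C)
    (hN : IsAbsHomogeneousOn S N) (hh : h ∈ S) (hr : N h < r) :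
    ∃ D, Tendsto (dyadicQuot F γ h) atTop (𝓝 D) ∧ |F (γ + h) - F γ - D| ≤ C * N h ^ 2 / 2 := by
  have step : ∀ m, dist (dyadicQuot F γ h m) (dyadicQuot F γ h (m + 1))
      ≤ C * N h ^ 2 / 2 / 2 / 2 ^ m := fun m =>
    (hF.dist_dyadicQuot_succ_le hN hh hr m).trans_eq (by ring)
  obtain ⟨D, hD⟩ := cauchySeq_tendsto_of_complete (cauchySeq_of_le_geometric_two step)
  refine ⟨D, hD, ?_⟩
  simpa only [Real.dist_eq, dyadicQuot, pow_zero, inv_one, one_smul, one_mul] using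
    dist_le_of_le_geometric_two_of_tendsto₀ step hD

lemma tendsto_dyadicQuot (hF : HasBoundedDifferences S N F γ r C) (hN : IsAbsHomogeneousOn S N)
    (hh : h ∈ S) : Tendsto (dyadicQuot F γ h) atTop (𝓝 (dyadicDeriv F γ h)) := by
  obtain ⟨m, hm⟩ := (hN.eventually_dyadic_smul_lt hF.pos hh).exists
  obtain ⟨D, hD, -⟩ := hF.exists_tendsto_of_lt hN (S.smul_mem _ hh) hm
  refine tendsto_nhds_limUnder ⟨2 ^ m * D, ?_⟩
  rw [← tendsto_add_atTop_iff_nat m]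
  refine (hD.const_mul (2 ^ m)).congr fun l => ?_
  rw [dyadicQuot, dyadicQuot, smul_smul, ← mul_inv, ← pow_add, ← mul_assoc, ← pow_add, add_comm m]

lemma abs_sub_dyadicDeriv_le (hF : HasBoundedDifferences S N F γ r C)
    (hN : IsAbsHomogeneousOn S N) (hh : h ∈ S) (hr : N h < r) :
    |F (γ + h) - F γ - dyadicDeriv F γ h| ≤ C * N h ^ 2 / 2 := by
  obtain ⟨D, hD, hle⟩ := hF.exists_tendsto_of_lt hN hh hr
  rwa [tendsto_nhds_unique (hF.tendsto_dyadicQuot hN hh) hD]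

lemma abs_dyadicDeriv_le (hF : HasBoundedDifferences S N F γ r C) (hN : IsAbsHomogeneousOn S N)
    (hh : h ∈ S) : |dyadicDeriv F γ h| ≤ C * N h := by
  refine le_of_tendsto (hF.tendsto_dyadicQuot hN hh).abs ?_
  filter_upwards [hN.eventually_dyadic_smul_lt hF.pos hh] with m hm
  rw [dyadicQuot, abs_mul, abs_of_nonneg (by positivity : (0 : ℝ) ≤ 2 ^ m)]
  calc _ ≤ (2 : ℝ) ^ m * (C * N (((2 : ℝ) ^ m)⁻¹ • h)) := by
        gcongr; exact hF.abs_fst_le _ (S.smul_mem _ hh) hm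
    _ = _ := by rw [hN.dyadic_smul hh]; field_simp

/-- The additivity defect is `2 ^ m` times a mixed second difference of increments of size
`2 ^ (-m)`. -/
lemma tendsto_dyadicQuot_add_sub (hF : HasBoundedDifferences S N F γ r C)
    (hN : IsAbsHomogeneousOn S N) (hh : h ∈ S) (hk : k ∈ S) :
    Tendsto (fun m => dyadicQuot F γ (h + k) m - dyadicQuot F γ h m - dyadicQuot F γ k m)
      atTop (𝓝 0) := by
  refine squeeze_zero_norm' (a := fun m : ℕ => (1 / 2 : ℝ) ^ m * (C * (N h * N k))) ?_ ?_
  · filter_upwards [hN.eventually_dyadic_smul_lt hF.pos hh,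
      hN.eventually_dyadic_smul_lt hF.pos hk] with m hm hm'
    have mixed := hF.abs_snd_le _ (S.smul_mem _ hh) _ (S.smul_mem _ hk) hm hm'
    rw [hN.dyadic_smul hh, hN.dyadic_smul hk] at mixed
    simp only [dyadicQuot, smul_add, Real.norm_eq_abs, ← add_assoc]
    rw [← mul_sub, ← mul_sub, abs_mul, abs_of_nonneg (by positivity : (0 : ℝ) ≤ 2 ^ m)]
    calc _ = (2 : ℝ) ^ m * _ := by congr 2; ring
      _ ≤ (2 : ℝ) ^ m * _ := mul_le_mul_of_nonneg_left mixed (by positivity)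
      _ = _ := by rw [one_div, inv_pow]; field_simp
  · simpa only [zero_mul] using (tendsto_pow_atTop_nhds_zero_of_lt_one (r := (1 / 2 : ℝ))
      (by norm_num) (by norm_num)).mul_const (C * (N h * N k))

lemma dyadicDeriv_add (hF : HasBoundedDifferences S N F γ r C) (hN : IsAbsHomogeneousOn S N)
    (hh : h ∈ S) (hk : k ∈ S) :
    dyadicDeriv F γ (h + k) = dyadicDeriv F γ h + dyadicDeriv F γ k := by
  have hlim := ((hF.tendsto_dyadicQuot hN (S.add_mem hh hk)).sub
    (hF.tendsto_dyadicQuot hN hh)).sub (hF.tendsto_dyadicQuot hN hk)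
  linarith [tendsto_nhds_unique hlim (hF.tendsto_dyadicQuot_add_sub hN hh hk)]

lemma dyadicDeriv_smul (hF : HasBoundedDifferences S N F γ r C) (hN : IsAbsHomogeneousOn S N)
    (c : ℝ) (hh : h ∈ S) : dyadicDeriv F γ (c • h) = c * dyadicDeriv F γ h := by
  let φ : ℝ →+ ℝ := AddMonoidHom.mk' (fun t => dyadicDeriv F γ (t • h)) fun s t => by
    rw [add_smul]
    exact hF.dyadicDeriv_add hN (S.smul_mem _ hh) (S.smul_mem _ hh)
  have hφ : Continuous φ := by
    refine AddMonoidHomClass.continuous_of_bound φ (C * N h) fun t => ?_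
    have bound := hF.abs_dyadicDeriv_le hN (S.smul_mem t hh)
    rw [hN.smul _ _ hh] at bound
    exact bound.trans_eq (by rw [Real.norm_eq_abs]; ring)
  simpa [φ] using map_real_smul φ hφ c 1

lemma abs_dyadicDeriv_sub_le (hF : HasBoundedDifferences S N F γ r C) {r' C' : ℝ}
    (hF' : HasBoundedDifferences S N F (γ + k) r' C') (hN : IsAbsHomogeneousOn S N)
    (hk : k ∈ S) (hkr : N k < r) (hh : h ∈ S) :
    |dyadicDeriv F (γ + k) h - dyadicDeriv F γ h| ≤ C * N k * N h := by
  refine le_of_tendsto ((hF'.tendsto_dyadicQuot hN hh).sub (hF.tendsto_dyadicQuot hN hh)).abs ?_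
  filter_upwards [hN.eventually_dyadic_smul_lt hF.pos hh] with m hm
  have mixed := hF.abs_snd_le _ hk _ (S.smul_mem _ hh) hkr hm
  rw [hN.dyadic_smul hh] at mixed
  simp only [dyadicQuot]
  rw [← mul_sub, abs_mul, abs_of_nonneg (by positivity : (0 : ℝ) ≤ 2 ^ m)]
  calc _ = (2 : ℝ) ^ m * _ := by congr 2; ring
    _ ≤ (2 : ℝ) ^ m * _ := mul_le_mul_of_nonneg_left mixed (by positivity)
    _ = _ := by field_simp

lemma exists_abs_sub_dyadicDeriv_le (hF : HasBoundedDifferences S N F γ r C)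
    (hN : IsAbsHomogeneousOn S N) {η : ℝ} (hη : 0 < η) :
    ∃ δ > 0, ∀ h ∈ S, N h < δ → |F (γ + h) - F γ - dyadicDeriv F γ h| ≤ η * N h := by
  obtain ⟨δ, hδ, mul_le⟩ := exists_pos_mul_le (C / 2) hη
  refine ⟨min r δ, lt_min hF.pos hδ, fun h hh hlt => ?_⟩
  have h0 := hN.nonneg h hh
  calc |F (γ + h) - F γ - dyadicDeriv F γ h| ≤ C * N h ^ 2 / 2 :=
        hF.abs_sub_dyadicDeriv_le hN hh (hlt.trans_le (min_le_left _ _))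
    _ = C / 2 * N h * N h := by ring
    _ ≤ η * N h := by gcongr; exact mul_le _ h0 (hlt.trans_le (min_le_right _ _))

lemma exists_abs_dyadicDeriv_sub_le (hF : HasBoundedDifferences S N F γ r C)
    (hN : IsAbsHomogeneousOn S N) {η : ℝ} (hη : 0 < η) :
    ∃ δ > 0, ∀ k ∈ S, N k < δ → (∃ r' C', HasBoundedDifferences S N F (γ + k) r' C') →
      ∀ h ∈ S, |dyadicDeriv F (γ + k) h - dyadicDeriv F γ h| ≤ η * N h := by
  obtain ⟨δ, hδ, mul_le⟩ := exists_pos_mul_le C hη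
  refine ⟨min r δ, lt_min hF.pos hδ, fun k hk hlt ⟨r', C', hF'⟩ h hh => ?_⟩
  have h0 := hN.nonneg h hh
  calc |dyadicDeriv F (γ + k) h - dyadicDeriv F γ h| ≤ C * N k * N h :=
        hF.abs_dyadicDeriv_sub_le hF' hN hk (hlt.trans_le (min_le_left _ _)) hh
    _ ≤ η * N h := by gcongr; exact mul_le _ (hN.nonneg k hk) (hlt.trans_le (min_le_right _ _))

end HasBoundedDifferences

end SecondDifference

/-! ### The space `H^{1+σ,2}` -/

section Gagliardo

variable {E : Type*} [NormedAddCommGroup E] {f g : ℝ → E}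

/-- The integrand of the squared Gagliardo seminorm `gagliardoSq`. -/
def gagliardoIntegrand (s : ℝ) (f : ℝ → E) (u w : ℝ) : ℝ≥0∞ :=
  ENNReal.ofReal (‖f (u + w) - f u‖ ^ 2 / |w| ^ (1 + 2 * s))

lemma gagliardoSq_eq_lintegral (s : ℝ) (f : ℝ → E) : gagliardoSq s f =
    ∫⁻ u in Ioc (0 : ℝ) 1, ∫⁻ w in Ioo (-(1 : ℝ) / 2) (1 / 2), gagliardoIntegrand s f u w := rfl

lemma measurable_uncurry_gagliardoIntegrand (s : ℝ) (hf : Continuous f) :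
    Measurable (Function.uncurry (gagliardoIntegrand s f)) := by
  refine ENNReal.measurable_ofReal.comp (Measurable.div ?_ ?_)
  · exact Continuous.measurable (by fun_prop)
  · exact (continuous_abs.comp continuous_snd).measurable.pow_const _

lemma measurable_lintegral_gagliardoIntegrand (s : ℝ) (hf : Continuous f) :
    Measurable fun u => ∫⁻ w in Ioo (-(1 : ℝ) / 2) (1 / 2), gagliardoIntegrand s f u w :=
  (measurable_uncurry_gagliardoIntegrand s hf).lintegral_prod_right'

lemma gagliardoIntegrand_add_le (s : ℝ) (f g : ℝ → E) (u w : ℝ) :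
    gagliardoIntegrand s (f + g) u w ≤
      2 * gagliardoIntegrand s f u w + 2 * gagliardoIntegrand s g u w := by
  have sq_add_le : ‖(f + g) (u + w) - (f + g) u‖ ^ 2 ≤
      2 * ‖f (u + w) - f u‖ ^ 2 + 2 * ‖g (u + w) - g u‖ ^ 2 := by
    rw [Pi.add_apply, Pi.add_apply, add_sub_add_comm, ← mul_add]
    exact (pow_le_pow_left₀ (norm_nonneg _) (norm_add_le _ _) 2).trans add_sq_le
  have two_eq : (2 : ℝ≥0∞) = ENNReal.ofReal 2 := by simp
  unfold gagliardoIntegrand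
  rw [two_eq, ← ENNReal.ofReal_mul zero_le_two, ← ENNReal.ofReal_mul zero_le_two,
    ← ENNReal.ofReal_add (by positivity) (by positivity), ← mul_div_assoc, ← mul_div_assoc,
    ← add_div]
  gcongr

lemma gagliardoSq_add_le (s : ℝ) (hf : Continuous f) (hg : Continuous g) :
    gagliardoSq s (f + g) ≤ 2 * gagliardoSq s f + 2 * gagliardoSq s g := by
  have mf (u : ℝ) := (measurable_uncurry_gagliardoIntegrand s hf).of_uncurry_left (x := u)
  have mg (u : ℝ) := (measurable_uncurry_gagliardoIntegrand s hg).of_uncurry_left (x := u)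
  have mf' := measurable_lintegral_gagliardoIntegrand s hf
  have mg' := measurable_lintegral_gagliardoIntegrand s hg
  simp only [gagliardoSq_eq_lintegral]
  rw [← lintegral_const_mul _ mf', ← lintegral_const_mul _ mg',
    ← lintegral_add_left (mf'.const_mul 2)]
  refine lintegral_mono fun u => ?_
  rw [← lintegral_const_mul _ (mf u), ← lintegral_const_mul _ (mg u),
    ← lintegral_add_left ((mf u).const_mul 2)]
  exact lintegral_mono fun w => gagliardoIntegrand_add_le s f g u w

lemma gagliardoSq_const_smul [NormedSpace ℝ E] (s c : ℝ) (hf : Continuous f) :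
    gagliardoSq s (c • f) = ENNReal.ofReal (c ^ 2) * gagliardoSq s f := by
  have pointwise (u w : ℝ) : gagliardoIntegrand s (c • f) u w =
      ENNReal.ofReal (c ^ 2) * gagliardoIntegrand s f u w := by
    unfold gagliardoIntegrand
    rw [← ENNReal.ofReal_mul (sq_nonneg c), ← mul_div_assoc, Pi.smul_apply, Pi.smul_apply,
      ← smul_sub, norm_smul, mul_pow, Real.norm_eq_abs, sq_abs]
  simp only [gagliardoSq_eq_lintegral, pointwise]
  rw [← lintegral_const_mul _ (measurable_lintegral_gagliardoIntegrand s hf)]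
  exact lintegral_congr fun u => lintegral_const_mul _
    (measurable_uncurry_gagliardoIntegrand s hf).of_uncurry_left

end Gagliardo

lemma periodic_deriv {E : Type*} [NormedAddCommGroup E] [NormedSpace ℝ E] {f : ℝ → E} {T : ℝ}
    (hf : Function.Periodic f T) : Function.Periodic (deriv f) T := fun u => by
  rw [← deriv_comp_add_const, funext hf]

namespace MemH1

variable {σ : ℝ} {γ γ₁ γ₂ : ℝ → Rn n}

lemma continuous_deriv (h : MemH1 σ γ) : Continuous (deriv γ) := h.2.1.continuous_deriv le_rfl

lemma differentiable (h : MemH1 σ γ) : Differentiable ℝ γ := h.2.1.differentiable one_ne_zero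

lemma deriv_periodic (h : MemH1 σ γ) : Function.Periodic (deriv γ) 1 := periodic_deriv h.1

lemma deriv_add (h₁ : MemH1 σ γ₁) (h₂ : MemH1 σ γ₂) :
    deriv (γ₁ + γ₂) = deriv γ₁ + deriv γ₂ :=
  funext fun u => _root_.deriv_add (h₁.differentiable u) (h₂.differentiable u)

lemma deriv_smul (c : ℝ) (h : MemH1 σ γ) : deriv (c • γ) = c • deriv γ :=
  funext fun u => deriv_const_smul c (h.differentiable u)

lemma add (h₁ : MemH1 σ γ₁) (h₂ : MemH1 σ γ₂) : MemH1 σ (γ₁ + γ₂) := by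
  refine ⟨h₁.1.add h₂.1, h₁.2.1.add h₂.2.1, ?_⟩
  rw [h₁.deriv_add h₂]
  refine (gagliardoSq_add_le σ h₁.continuous_deriv h₂.continuous_deriv).trans_lt ?_
  exact ENNReal.add_lt_top.2 ⟨ENNReal.mul_lt_top (by simp) h₁.2.2,
    ENNReal.mul_lt_top (by simp) h₂.2.2⟩

lemma smul (c : ℝ) (h : MemH1 σ γ) : MemH1 σ (c • γ) := by
  refine ⟨h.1.smul c, h.2.1.const_smul c, ?_⟩
  rw [h.deriv_smul, gagliardoSq_const_smul _ _ h.continuous_deriv]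
  exact ENNReal.mul_lt_top (by simp) h.2.2

lemma zero : MemH1 σ (0 : ℝ → Rn n) := by
  refine ⟨fun _ => rfl, contDiff_const, ?_⟩
  simp [gagliardoSq, deriv_zero]

end MemH1

/-- The space `H^{1+σ,2}(ℝ/ℤ, ℝⁿ)`, as a space of functions on `ℝ`. -/
def H1Space (n : ℕ) (σ : ℝ) : Submodule ℝ (ℝ → Rn n) where
  carrier := {γ | MemH1 σ γ}
  add_mem' := MemH1.add
  zero_mem' := MemH1.zero
  smul_mem' c _ := MemH1.smul c

section H1Norm

variable {σ : ℝ} {γ : ℝ → Rn n}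

lemma H1Norm_nonneg (σ : ℝ) (γ : ℝ → Rn n) : 0 ≤ H1Norm σ γ := by
  unfold H1Norm; positivity

lemma H1Norm_smul (c : ℝ) (h : MemH1 σ γ) : H1Norm σ (c • γ) = |c| * H1Norm σ γ := by
  unfold H1Norm
  rw [h.deriv_smul, gagliardoSq_const_smul _ _ h.continuous_deriv, ENNReal.toReal_mul,
    ENNReal.toReal_ofReal (sq_nonneg c), Real.sqrt_mul (sq_nonneg c), Real.sqrt_sq_eq_abs]
  simp only [Pi.smul_apply, norm_smul, mul_pow, Real.norm_eq_abs, sq_abs, ← mul_add]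
  rw [integral_const_mul, Real.sqrt_mul (sq_nonneg c), Real.sqrt_sq_eq_abs, mul_add]

lemma gagliardoSq_toReal_le_H1Norm_sq (σ : ℝ) (γ : ℝ → Rn n) :
    (gagliardoSq σ (deriv γ)).toReal ≤ H1Norm σ γ ^ 2 := by
  rw [← Real.sqrt_le_left (H1Norm_nonneg _ _)]
  exact le_add_of_nonneg_left (Real.sqrt_nonneg _)

lemma integral_norm_deriv_sq_le_H1Norm_sq (h : MemH1 σ γ) :
    ∫ u in (0 : ℝ)..1, ‖deriv γ u‖ ^ 2 ≤ H1Norm σ γ ^ 2 := by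
  have hc := h.continuous_deriv
  have hd := h.2.1.continuous
  calc ∫ u in (0 : ℝ)..1, ‖deriv γ u‖ ^ 2
      ≤ ∫ u in (0 : ℝ)..1, (‖γ u‖ ^ 2 + ‖deriv γ u‖ ^ 2) :=
        intervalIntegral.integral_mono_on zero_le_one
          (Continuous.intervalIntegrable (by fun_prop) _ _)
          (Continuous.intervalIntegrable (by fun_prop) _ _)
          fun u _ => le_add_of_nonneg_left (sq_nonneg _)
    _ ≤ H1Norm σ γ ^ 2 := by
        rw [intervalIntegral.integral_of_le zero_le_one, ← Real.sqrt_le_left (H1Norm_nonneg _ _)]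
        exact le_add_of_nonneg_right (Real.sqrt_nonneg _)

end H1Norm

section LIntegral

variable {F : ℝ → ℝ≥0∞} {l : ℝ}

lemma setLIntegral_preimage_add_mul (hF : Measurable F) (a : ℝ) (hl : 0 < l) {S : Set ℝ}
    (hS : MeasurableSet S) :
    ∫⁻ t in (fun t => a + t * l) ⁻¹' S, F (a + t * l) = ENNReal.ofReal l⁻¹ * ∫⁻ y in S, F y := by
  have map_volume : Measure.map (fun t => a + t * l) volume = ENNReal.ofReal l⁻¹ • volume := by
    change Measure.map ((a + ·) ∘ (· * l)) volume = _
    rw [← Measure.map_map (measurable_const_add a) (measurable_mul_const l),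
      Real.map_volume_mul_right hl.ne', Measure.map_smul, map_add_left_eq_self,
      abs_of_pos (inv_pos.2 hl)]
  rw [← setLIntegral_map hS hF (by fun_prop), map_volume, Measure.restrict_smul,
    lintegral_smul_measure, smul_eq_mul]

lemma setLIntegral_comp_mul_le (hF : Measurable F) (hl : 0 < l) {S : Set ℝ}
    (hS : MeasurableSet S) (maps : MapsTo (· * l) S S) :
    ∫⁻ t in S, F (t * l) ≤ ENNReal.ofReal l⁻¹ * ∫⁻ y in S, F y := by
  have preimage := setLIntegral_preimage_add_mul hF 0 hl hS
  simp only [zero_add] at preimage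
  exact (lintegral_mono_set maps).trans_eq preimage

lemma setLIntegral_unit_comp_add_mul (hF : Measurable F) (a : ℝ) (hl : 0 < l) :
    ∫⁻ t in Ioc (0 : ℝ) 1, F (a + t * l) = ENNReal.ofReal l⁻¹ * ∫⁻ y in Ioc a (a + l), F y := by
  have preimage : (fun t => a + t * l) ⁻¹' Ioc a (a + l) = Ioc 0 1 := by
    ext t
    simp only [mem_preimage, mem_Ioc, lt_add_iff_pos_right, add_le_add_iff_left,
      mul_pos_iff_of_pos_right hl, mul_le_iff_le_one_left hl]
  rw [← preimage, setLIntegral_preimage_add_mul hF a hl measurableSet_Ioc]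

lemma setLIntegral_Ioc_add_one_eq (hF : Function.Periodic F 1) (x : ℝ) :
    ∫⁻ y in Ioc x (x + 1), F y = ∫⁻ y in Ioc (0 : ℝ) 1, F y := by
  have domain_x := isAddFundamentalDomain_Ioc (zero_lt_one' ℝ) x volume
  have domain_zero := isAddFundamentalDomain_Ioc (zero_lt_one' ℝ) 0 volume
  rw [zero_add] at domain_zero
  refine domain_x.setLIntegral_eq domain_zero F ?_
  rintro ⟨_, hk⟩ y
  obtain ⟨k, rfl⟩ := AddSubgroup.mem_zmultiples_iff.1 hk
  rw [← hF.zsmul k y, add_comm y]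
  rfl

lemma setLIntegral_unit_comp_add_mul_le (hF : Measurable F) (hper : Function.Periodic F 1) (a : ℝ)
    (hl : 0 < l) (hl1 : l ≤ 1) :
    ∫⁻ t in Ioc (0 : ℝ) 1, F (a + t * l) ≤ ENNReal.ofReal l⁻¹ * ∫⁻ y in Ioc (0 : ℝ) 1, F y := by
  rw [setLIntegral_unit_comp_add_mul hF a hl, ← setLIntegral_Ioc_add_one_eq hper a]
  gcongr

end LIntegral

section SegmentMean

variable {E : Type*} [NormedAddCommGroup E] {f g : ℝ → E} {s l : ℝ}

lemma setLIntegral_sub_sq_le_gagliardoIntegrand (hs : 0 ≤ 1 + 2 * s) (hf : Continuous f) (y : ℝ)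
    (hl : 0 < l) (hl2 : l ≤ 1 / 2) :
    ∫⁻ w in Ioo (-l) l, ENNReal.ofReal (‖f (y + w) - f y‖ ^ 2) ≤
      ENNReal.ofReal (l ^ (1 + 2 * s)) *
        ∫⁻ w in Ioo (-(1 : ℝ) / 2) (1 / 2), gagliardoIntegrand s f y w := by
  have pointwise : ∀ w ∈ Ioo (-l) l, ENNReal.ofReal (‖f (y + w) - f y‖ ^ 2) ≤
      ENNReal.ofReal (l ^ (1 + 2 * s)) * gagliardoIntegrand s f y w := by
    intro w hw
    rw [gagliardoIntegrand, ← ENNReal.ofReal_mul (by positivity), ← mul_div_assoc]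
    refine ENNReal.ofReal_le_ofReal ?_
    rcases eq_or_ne w 0 with rfl | hw0
    · simp
    · rw [le_div_iff₀ (Real.rpow_pos_of_pos (abs_pos.2 hw0) _), mul_comm]
      gcongr
      exact (abs_lt.2 hw).le
  refine (setLIntegral_mono' measurableSet_Ioo pointwise).trans ?_
  rw [lintegral_const_mul _ (measurable_uncurry_gagliardoIntegrand s hf).of_uncurry_left]
  gcongr
  linarith

lemma setLIntegral_unit_sub_sq_le (hs : 0 ≤ 1 + 2 * s) (hf : Continuous f) {x y : ℝ}
    (hl : 0 < l) (hl2 : l ≤ 1 / 2) (hy : y ∈ Ioc x (x + l)) :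
    ∫⁻ t in Ioc (0 : ℝ) 1, ENNReal.ofReal (‖f (x + t * (l / 2)) - f y‖ ^ 2) ≤
      ENNReal.ofReal (2 * l ^ (2 * s)) *
        ∫⁻ w in Ioo (-(1 : ℝ) / 2) (1 / 2), gagliardoIntegrand s f y w := by
  have hm : Measurable fun w => ENNReal.ofReal (‖f (y + w) - f y‖ ^ 2) :=
    ENNReal.measurable_ofReal.comp (Continuous.measurable (by fun_prop))
  have subset : Ioc (x - y) (x - y + l / 2) ⊆ Ioo (-l) l := fun w hw =>
    ⟨by linarith [hw.1, hy.2], by linarith [hw.2, hy.1]⟩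
  calc ∫⁻ t in Ioc (0 : ℝ) 1, ENNReal.ofReal (‖f (x + t * (l / 2)) - f y‖ ^ 2)
      = ∫⁻ t in Ioc (0 : ℝ) 1, ENNReal.ofReal (‖f (y + (x - y + t * (l / 2))) - f y‖ ^ 2) := by
        simp only [← add_assoc, add_sub_cancel]
    _ = ENNReal.ofReal (l / 2)⁻¹ * ∫⁻ w in Ioc (x - y) (x - y + l / 2),
          ENNReal.ofReal (‖f (y + w) - f y‖ ^ 2) :=
        setLIntegral_unit_comp_add_mul hm _ (by positivity)
    _ ≤ ENNReal.ofReal (l / 2)⁻¹ * (ENNReal.ofReal (l ^ (1 + 2 * s)) *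
          ∫⁻ w in Ioo (-(1 : ℝ) / 2) (1 / 2), gagliardoIntegrand s f y w) := by
        gcongr
        exact (lintegral_mono_set subset).trans
          (setLIntegral_sub_sq_le_gagliardoIntegrand hs hf y hl hl2)
    _ = _ := by
        rw [← mul_assoc, ← ENNReal.ofReal_mul (by positivity), Real.rpow_add hl, Real.rpow_one]
        congr 2
        field_simp

lemma setLIntegral_setLIntegral_unit_sub_sq_le (hs : 0 ≤ 1 + 2 * s) (hf : Continuous f)
    (hper : Function.Periodic f 1) (x : ℝ) (hl : 0 < l) (hl2 : l ≤ 1 / 2) :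
    ∫⁻ p in Ioc (0 : ℝ) 1, ∫⁻ t in Ioc (0 : ℝ) 1,
        ENNReal.ofReal (‖f (x + t * (l / 2)) - f (x + p * l)‖ ^ 2) ≤
      ENNReal.ofReal (2 * l ^ (2 * s - 1)) * gagliardoSq s f := by
  set F : ℝ → ℝ≥0∞ := fun y => ∫⁻ w in Ioo (-(1 : ℝ) / 2) (1 / 2), gagliardoIntegrand s f y w
  have hF : Measurable F := measurable_lintegral_gagliardoIntegrand s hf
  have hFper : Function.Periodic F 1 := fun y => by
    simp only [F, gagliardoIntegrand, hper y, add_right_comm y 1, hper (y + _)]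
  calc ∫⁻ p in Ioc (0 : ℝ) 1, ∫⁻ t in Ioc (0 : ℝ) 1,
        ENNReal.ofReal (‖f (x + t * (l / 2)) - f (x + p * l)‖ ^ 2)
      ≤ ∫⁻ p in Ioc (0 : ℝ) 1, ENNReal.ofReal (2 * l ^ (2 * s)) * F (x + p * l) :=
        setLIntegral_mono' measurableSet_Ioc fun p hp =>
          setLIntegral_unit_sub_sq_le hs hf hl hl2
            ⟨by nlinarith [hp.1], by nlinarith [hp.2]⟩
    _ = ENNReal.ofReal (2 * l ^ (2 * s)) * ∫⁻ p in Ioc (0 : ℝ) 1, F (x + p * l) :=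
        lintegral_const_mul _ (hF.comp (by fun_prop))
    _ ≤ ENNReal.ofReal (2 * l ^ (2 * s)) * (ENNReal.ofReal l⁻¹ * gagliardoSq s f) := by
        gcongr
        exact setLIntegral_unit_comp_add_mul_le hF hFper x hl (by linarith)
    _ = _ := by
        rw [← mul_assoc, ← ENNReal.ofReal_mul (by positivity), Real.rpow_sub_one hl.ne',
          mul_assoc, div_eq_mul_inv]

lemma ofReal_integral_unit {d : ℝ → ℝ} (hd : Continuous d) (h0 : ∀ t, 0 ≤ d t) :
    ENNReal.ofReal (∫ t in (0 : ℝ)..1, d t) = ∫⁻ t in Ioc (0 : ℝ) 1, ENNReal.ofReal (d t) := by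
  rw [intervalIntegral.integral_of_le zero_le_one]
  exact ofReal_integral_eq_lintegral_ofReal (hd.intervalIntegrable 0 1).1
    (Eventually.of_forall h0)

variable [NormedSpace ℝ E]

lemma norm_integral_unit_sq_le (hf : Continuous f) :
    ‖∫ t in (0 : ℝ)..1, f t‖ ^ 2 ≤ ∫ t in (0 : ℝ)..1, ‖f t‖ ^ 2 :=
  (pow_le_pow_left₀ (norm_nonneg _)
    (intervalIntegral.norm_integral_le_integral_norm zero_le_one) 2).trans
    (sq_integral_unit_le hf.norm)

/-- The mean of `f` over the oriented segment from `p.1` to `p.1 + p.2`. -/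
def segMean (f : ℝ → E) (p : ℝ × ℝ) : E := ∫ s in (0 : ℝ)..1, f (p.1 + s * p.2)

lemma continuous_segMean (hf : Continuous f) : Continuous (segMean f) :=
  intervalIntegral.continuous_parametric_intervalIntegral_of_continuous'
    (f := fun (p : ℝ × ℝ) s => f (p.1 + s * p.2))
    (by simp only [Function.uncurry_def]; fun_prop) 0 1

lemma smul_segMean (f : ℝ → E) (u w : ℝ) : w • segMean f (u, w) = ∫ θ in u..(u + w), f θ := by
  have := intervalIntegral.smul_integral_comp_add_mul (a := 0) (b := 1) f w u
  simpa only [segMean, mul_comm, zero_mul, mul_one, one_mul, mul_zero, add_zero] using this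

lemma segMean_add (hf : Continuous f) (hg : Continuous g) (p : ℝ × ℝ) :
    segMean (f + g) p = segMean f p + segMean g p :=
  intervalIntegral.integral_add (Continuous.intervalIntegrable (by fun_prop) _ _)
    (Continuous.intervalIntegrable (by fun_prop) _ _)

lemma norm_segMean_le_of_norm_le {M : ℝ} (h : ∀ u, ‖f u‖ ≤ M) (p : ℝ × ℝ) :
    ‖segMean f p‖ ≤ M := by
  simpa [segMean] using intervalIntegral.norm_integral_le_of_norm_le_const (a := 0) (b := 1)
    (f := fun s => f (p.1 + s * p.2)) (C := M) fun s _ => h _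

lemma norm_segMean_le (f : ℝ → E) (p : ℝ × ℝ) : ‖segMean f p‖ ≤ segMean (fun u => ‖f u‖) p :=
  intervalIntegral.norm_integral_le_integral_norm zero_le_one

lemma segMean_norm_nonneg (f : ℝ → E) (p : ℝ × ℝ) : 0 ≤ segMean (fun u => ‖f u‖) p :=
  (norm_nonneg _).trans (norm_segMean_le f p)

lemma norm_segMean_half_le (hf : Continuous f) (hper : Function.Periodic f 1) (x : ℝ) :
    ‖segMean f (x, 1 / 2)‖ ≤ 2 * √(∫ u in (0 : ℝ)..1, ‖f u‖ ^ 2) := by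
  have hI : 0 ≤ ∫ u in (0 : ℝ)..1, ‖f u‖ ^ 2 :=
    intervalIntegral.integral_nonneg zero_le_one fun _ _ => sq_nonneg _
  have half_le : ∫ t in (0 : ℝ)..1, ‖f (x + t * (1 / 2))‖ ^ 2 ≤
      2 * ∫ u in (0 : ℝ)..1, ‖f u‖ ^ 2 := by
    rw [← ENNReal.ofReal_le_ofReal_iff (by positivity), ENNReal.ofReal_mul zero_le_two,
      ofReal_integral_unit (by fun_prop) fun _ => sq_nonneg _,
      ofReal_integral_unit (by fun_prop) fun _ => sq_nonneg _]
    simpa only [one_div, inv_inv] using setLIntegral_unit_comp_add_mul_le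
      (F := fun y => ENNReal.ofReal (‖f y‖ ^ 2))
      (ENNReal.measurable_ofReal.comp (Continuous.measurable (by fun_prop)))
      (hper.comp fun v => ENNReal.ofReal (‖v‖ ^ 2)) x (l := 1 / 2) one_half_pos one_half_lt_one.le
  refine le_of_sq_le_sq ?_ (by positivity)
  rw [mul_pow, Real.sq_sqrt hI]
  calc ‖segMean f (x, 1 / 2)‖ ^ 2 ≤ ∫ t in (0 : ℝ)..1, ‖f (x + t * (1 / 2))‖ ^ 2 :=
        norm_integral_unit_sq_le (by fun_prop)
    _ ≤ 2 ^ 2 * ∫ u in (0 : ℝ)..1, ‖f u‖ ^ 2 := by linarith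

variable [CompleteSpace E]

lemma segMean_zero_right (f : ℝ → E) (x : ℝ) : segMean f (x, 0) = f x := by simp [segMean]

lemma norm_integral_sub_integral_sq_le (hf : Continuous f) (hg : Continuous g) :
    ‖(∫ t in (0 : ℝ)..1, f t) - ∫ p in (0 : ℝ)..1, g p‖ ^ 2 ≤
      ∫ p in (0 : ℝ)..1, ∫ t in (0 : ℝ)..1, ‖f t - g p‖ ^ 2 := by
  have inner_eq (p : ℝ) : (∫ t in (0 : ℝ)..1, f t) - g p = ∫ t in (0 : ℝ)..1, (f t - g p) := by
    rw [intervalIntegral.integral_sub (hf.intervalIntegrable _ _) (by simp)]; simp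
  have outer_eq : (∫ t in (0 : ℝ)..1, f t) - ∫ p in (0 : ℝ)..1, g p =
      ∫ p in (0 : ℝ)..1, ((∫ t in (0 : ℝ)..1, f t) - g p) := by
    rw [intervalIntegral.integral_sub (by simp) (hg.intervalIntegrable _ _)]; simp
  have hcont : Continuous fun p => ∫ t in (0 : ℝ)..1, ‖f t - g p‖ ^ 2 :=
    intervalIntegral.continuous_parametric_intervalIntegral_of_continuous'
      (f := fun p t => ‖f t - g p‖ ^ 2) (by simp only [Function.uncurry_def]; fun_prop) 0 1
  rw [outer_eq]
  refine (norm_integral_unit_sq_le (by fun_prop)).trans ?_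
  refine intervalIntegral.integral_mono_on zero_le_one
    (Continuous.intervalIntegrable (by fun_prop) _ _) (hcont.intervalIntegrable _ _) fun p _ => ?_
  rw [inner_eq]
  exact norm_integral_unit_sq_le (by fun_prop)

lemma norm_segMean_half_sub_segMean_sq_le (hs : 0 ≤ 1 + 2 * s) (hf : Continuous f)
    (hper : Function.Periodic f 1) (hG : gagliardoSq s f ≠ ⊤) (x : ℝ) (hl : 0 < l)
    (hl2 : l ≤ 1 / 2) :
    ‖segMean f (x, l / 2) - segMean f (x, l)‖ ^ 2 ≤
      2 * l ^ (2 * s - 1) * (gagliardoSq s f).toReal := by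
  have hcont : Continuous fun p => ∫ t in (0 : ℝ)..1, ‖f (x + t * (l / 2)) - f (x + p * l)‖ ^ 2 :=
    intervalIntegral.continuous_parametric_intervalIntegral_of_continuous'
      (f := fun p t => ‖f (x + t * (l / 2)) - f (x + p * l)‖ ^ 2)
      (by simp only [Function.uncurry_def]; fun_prop) 0 1
  refine (norm_integral_sub_integral_sq_le (f := fun t => f (x + t * (l / 2)))
    (g := fun p => f (x + p * l)) (by fun_prop) (by fun_prop)).trans ?_
  rw [← ENNReal.ofReal_le_ofReal_iff (by positivity), ENNReal.ofReal_mul (by positivity),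
    ENNReal.ofReal_toReal hG, ofReal_integral_unit hcont fun p =>
      intervalIntegral.integral_nonneg zero_le_one fun t _ => sq_nonneg _]
  refine Eq.trans_le (lintegral_congr fun p => ofReal_integral_unit ?_ fun t => sq_nonneg _)
    (setLIntegral_setLIntegral_unit_sub_sq_le hs hf hper x hl hl2)
  fun_prop

lemma dist_segMean_dyadic_le (hs : 1 ≤ 2 * s) (hf : Continuous f)
    (hper : Function.Periodic f 1) (hG : gagliardoSq s f ≠ ⊤) (x : ℝ) (j : ℕ) :
    dist (segMean f (x, (1 / 2) ^ j / 2)) (segMean f (x, (1 / 2) ^ (j + 1) / 2)) ≤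
      2 * √(gagliardoSq s f).toReal * ((1 / 2) ^ ((2 * s - 1) / 2)) ^ j := by
  set G := (gagliardoSq s f).toReal
  have hG0 : 0 ≤ G := ENNReal.toReal_nonneg
  have pow_le_one : (1 / 2 : ℝ) ^ j ≤ 1 := pow_le_one₀ (by norm_num) (by norm_num)
  have scale_le : ((1 / 2 : ℝ) ^ j / 2) ^ (2 * s - 1) ≤
      (((1 / 2) ^ ((2 * s - 1) / 2)) ^ j) ^ 2 := by
    have rpow_sq : (((1 / 2 : ℝ) ^ ((2 * s - 1) / 2)) ^ j) ^ 2 = ((1 / 2) ^ j) ^ (2 * s - 1) := by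
      rw [pow_right_comm, ← Real.rpow_mul_natCast (by norm_num), Real.rpow_pow_comm (by norm_num)]
      congr 2; push_cast; ring
    rw [rpow_sq]
    exact Real.rpow_le_rpow (by positivity) (half_le_self (by positivity)) (by linarith)
  have step := norm_segMean_half_sub_segMean_sq_le (by linarith) hf hper hG x
    (l := (1 / 2) ^ j / 2) (by positivity) (by linarith)
  have half_eq : (1 / 2 : ℝ) ^ j / 2 / 2 = (1 / 2) ^ (j + 1) / 2 := by ring
  rw [dist_comm, dist_eq_norm, ← half_eq]
  refine le_of_sq_le_sq ?_ (by positivity)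
  calc _ ≤ 2 * ((1 / 2 : ℝ) ^ j / 2) ^ (2 * s - 1) * G := step
    _ ≤ 4 * (((1 / 2) ^ ((2 * s - 1) / 2)) ^ j) ^ 2 * G := by gcongr; norm_num
    _ = _ := by rw [mul_pow, mul_pow, Real.sq_sqrt hG0]; ring

lemma exists_norm_le_gagliardoSq (hs : 1 < 2 * s) : ∃ C : ℝ, 0 ≤ C ∧
    ∀ f : ℝ → E, Continuous f → Function.Periodic f 1 → gagliardoSq s f ≠ ⊤ → ∀ x,
      ‖f x‖ ≤ 2 * √(∫ u in (0 : ℝ)..1, ‖f u‖ ^ 2) + C * √(gagliardoSq s f).toReal := by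
  set r : ℝ := (1 / 2 : ℝ) ^ ((2 * s - 1) / 2)
  have hr : r < 1 := Real.rpow_lt_one (by norm_num) (by norm_num) (by linarith)
  refine ⟨2 / (1 - r), div_nonneg zero_le_two (sub_pos.2 hr).le, fun f hf hper hG x => ?_⟩
  have tendsto_mean : Tendsto (fun j : ℕ => segMean f (x, (1 / 2) ^ j / 2)) atTop (𝓝 (f x)) := by
    have tendsto_length : Tendsto (fun j : ℕ => (1 / 2 : ℝ) ^ j / 2) atTop (𝓝 0) := by
      simpa using (tendsto_pow_atTop_nhds_zero_of_lt_one one_half_pos.le one_half_lt_one).div_const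
        (2 : ℝ)
    rw [← segMean_zero_right f x]
    exact ((continuous_segMean hf).tendsto _).comp (tendsto_const_nhds.prodMk_nhds tendsto_length)
  have dist_le := dist_le_of_le_geometric_of_tendsto₀ r _ hr
    (dist_segMean_dyadic_le hs.le hf hper hG x) tendsto_mean
  rw [pow_zero, dist_comm, dist_eq_norm] at dist_le
  calc ‖f x‖ ≤ ‖segMean f (x, 1 / 2)‖ + ‖f x - segMean f (x, 1 / 2)‖ :=
        norm_le_norm_add_norm_sub' _ _
    _ ≤ _ := add_le_add (norm_segMean_half_le hf hper x) (dist_le.trans_eq (by ring))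

end SegmentMean

lemma MemH1.exists_norm_deriv_le (n : ℕ) {σ : ℝ} (hσ : 1 < 2 * σ) : ∃ C : ℝ, 1 ≤ C ∧
    ∀ h : ℝ → Rn n, MemH1 σ h → ∀ u, ‖deriv h u‖ ≤ C * H1Norm σ h := by
  obtain ⟨C, hC, norm_le⟩ := exists_norm_le_gagliardoSq (E := Rn n) hσ
  refine ⟨2 + C, by linarith, fun h hh u => ?_⟩
  have l2_le : √(∫ u in (0 : ℝ)..1, ‖deriv h u‖ ^ 2) ≤ H1Norm σ h :=
    (Real.sqrt_le_left (H1Norm_nonneg _ _)).2 (integral_norm_deriv_sq_le_H1Norm_sq hh)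
  have seminorm_le : √(gagliardoSq σ (deriv h)).toReal ≤ H1Norm σ h :=
    (Real.sqrt_le_left (H1Norm_nonneg _ _)).2 (gagliardoSq_toReal_le_H1Norm_sq _ _)
  calc ‖deriv h u‖ ≤ _ := norm_le (deriv h) hh.continuous_deriv hh.deriv_periodic hh.2.2.ne u
    _ ≤ 2 * H1Norm σ h + C * H1Norm σ h := by gcongr
    _ = (2 + C) * H1Norm σ h := by ring

/-! ### The weight dominating the integrand of the energy -/

section Weight

variable {E : Type*} [NormedAddCommGroup E] {f : ℝ → E} {σ : ℝ}

/-- The mean square oscillation of `f` over the segment from `p.1` to `p.1 + p.2`, relative to its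
value at `p.1`. -/
def meanSqOsc (f : ℝ → E) (p : ℝ × ℝ) : ℝ := ∫ s in (0 : ℝ)..1, ‖f (p.1 + s * p.2) - f p.1‖ ^ 2

lemma continuous_meanSqOsc (hf : Continuous f) : Continuous (meanSqOsc f) :=
  intervalIntegral.continuous_parametric_intervalIntegral_of_continuous'
    (f := fun (p : ℝ × ℝ) s => ‖f (p.1 + s * p.2) - f p.1‖ ^ 2)
    (by simp only [Function.uncurry_def]; fun_prop) 0 1

lemma meanSqOsc_nonneg (f : ℝ → E) (p : ℝ × ℝ) : 0 ≤ meanSqOsc f p :=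
  intervalIntegral.integral_nonneg zero_le_one fun _ _ => sq_nonneg _

/-- Lebesgue measure on `(0, 1] × (-1/2, 1/2)`, the domain of integration of the energy. -/
def pairMeasure : Measure (ℝ × ℝ) :=
  (volume.restrict (Ioc (0 : ℝ) 1)).prod (volume.restrict (Ioo (-(1 : ℝ) / 2) (1 / 2)))

instance : IsFiniteMeasure pairMeasure := by unfold pairMeasure; infer_instance

lemma lintegral_scaled_sq_div_le (hσ : 0 ≤ σ) (hf : Continuous f) (u : ℝ) {s : ℝ}
    (hs : s ∈ Ioc (0 : ℝ) 1) :
    ∫⁻ w in Ioo (-(1 : ℝ) / 2) (1 / 2),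
        ENNReal.ofReal (‖f (u + s * w) - f u‖ ^ 2 / |w| ^ (1 + 2 * σ)) ≤
      ∫⁻ w in Ioo (-(1 : ℝ) / 2) (1 / 2), gagliardoIntegrand σ f u w := by
  have hs0 := hs.1
  have hm : Measurable (gagliardoIntegrand σ f u) :=
    (measurable_uncurry_gagliardoIntegrand σ hf).of_uncurry_left
  have maps : MapsTo (· * s) (Ioo (-(1 : ℝ) / 2) (1 / 2)) (Ioo (-(1 : ℝ) / 2) (1 / 2)) :=
    fun w hw => ⟨by nlinarith [hs.2, hw.1], by nlinarith [hs.2, hw.2]⟩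
  calc ∫⁻ w in Ioo (-(1 : ℝ) / 2) (1 / 2),
        ENNReal.ofReal (‖f (u + s * w) - f u‖ ^ 2 / |w| ^ (1 + 2 * σ))
      = ∫⁻ w in Ioo (-(1 : ℝ) / 2) (1 / 2),
          ENNReal.ofReal (s ^ (1 + 2 * σ)) * gagliardoIntegrand σ f u (w * s) := by
        refine lintegral_congr fun w => ?_
        have rpow_pos := Real.rpow_pos_of_pos hs0 (1 + 2 * σ)
        rw [gagliardoIntegrand, ← ENNReal.ofReal_mul rpow_pos.le, mul_comm w s, abs_mul,
          abs_of_pos hs0, Real.mul_rpow hs0.le (abs_nonneg w), ← mul_div_assoc,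
          mul_div_mul_left _ _ rpow_pos.ne']
    _ = ENNReal.ofReal (s ^ (1 + 2 * σ)) *
          ∫⁻ w in Ioo (-(1 : ℝ) / 2) (1 / 2), gagliardoIntegrand σ f u (w * s) :=
        lintegral_const_mul _ (hm.comp (by fun_prop))
    _ ≤ ENNReal.ofReal (s ^ (1 + 2 * σ)) * (ENNReal.ofReal s⁻¹ *
          ∫⁻ w in Ioo (-(1 : ℝ) / 2) (1 / 2), gagliardoIntegrand σ f u w) := by
        gcongr
        exact setLIntegral_comp_mul_le hm hs0 measurableSet_Ioo maps
    _ = ENNReal.ofReal (s ^ (2 * σ)) *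
          ∫⁻ w in Ioo (-(1 : ℝ) / 2) (1 / 2), gagliardoIntegrand σ f u w := by
        rw [← mul_assoc, ← ENNReal.ofReal_mul (by positivity), ← div_eq_mul_inv,
          ← Real.rpow_sub_one hs0.ne', add_sub_cancel_left]
    _ ≤ _ := mul_le_of_le_one_left' (ENNReal.ofReal_le_one.2
        (Real.rpow_le_one hs0.le hs.2 (by positivity)))

lemma lintegral_meanSqOsc_div_le (hσ : 0 ≤ σ) (hf : Continuous f) (u : ℝ) :
    ∫⁻ w in Ioo (-(1 : ℝ) / 2) (1 / 2), ENNReal.ofReal (meanSqOsc f (u, w) / |w| ^ (1 + 2 * σ)) ≤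
      ∫⁻ w in Ioo (-(1 : ℝ) / 2) (1 / 2), gagliardoIntegrand σ f u w := by
  have unfold_mean (w : ℝ) : ENNReal.ofReal (meanSqOsc f (u, w) / |w| ^ (1 + 2 * σ)) =
      ∫⁻ s in Ioc (0 : ℝ) 1, ENNReal.ofReal (‖f (u + s * w) - f u‖ ^ 2 / |w| ^ (1 + 2 * σ)) := by
    rw [meanSqOsc, ← intervalIntegral.integral_div]
    exact ofReal_integral_unit (Continuous.div_const (by fun_prop) _) fun s => by positivity
  have hm : Measurable fun q : ℝ × ℝ =>
      ENNReal.ofReal (‖f (u + q.2 * q.1) - f u‖ ^ 2 / |q.1| ^ (1 + 2 * σ)) := by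
    refine ENNReal.measurable_ofReal.comp (Measurable.div ?_ ?_)
    · exact Continuous.measurable (by fun_prop)
    · exact (continuous_abs.comp continuous_fst).measurable.pow_const _
  simp only [unfold_mean]
  rw [lintegral_lintegral_swap hm.aemeasurable]
  exact (setLIntegral_mono' measurableSet_Ioc fun s hs =>
    lintegral_scaled_sq_div_le hσ hf u hs).trans_eq (by simp)

lemma measurable_meanSqOsc_div (r : ℝ) (hf : Continuous f) :
    Measurable fun p : ℝ × ℝ => meanSqOsc f p / |p.2| ^ r :=
  (continuous_meanSqOsc hf).measurable.div
    ((continuous_abs.comp continuous_snd).measurable.pow_const _)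

lemma lintegral_pairMeasure_meanSqOsc_div_le (hσ : 0 ≤ σ) (hf : Continuous f) :
    ∫⁻ p, ENNReal.ofReal (meanSqOsc f p / |p.2| ^ (1 + 2 * σ)) ∂pairMeasure ≤ gagliardoSq σ f := by
  rw [pairMeasure, lintegral_prod]
  · exact lintegral_mono fun u => lintegral_meanSqOsc_div_le hσ hf u
  · exact (ENNReal.measurable_ofReal.comp (measurable_meanSqOsc_div _ hf)).aemeasurable

lemma integrable_meanSqOsc_div (hσ : 0 ≤ σ) (hf : Continuous f) (hG : gagliardoSq σ f < ⊤) :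
    Integrable (fun p => meanSqOsc f p / |p.2| ^ (1 + 2 * σ)) pairMeasure := by
  refine ⟨(measurable_meanSqOsc_div _ hf).aestronglyMeasurable, ?_⟩
  rw [hasFiniteIntegral_iff_ofReal (ae_of_all _ fun p =>
    div_nonneg (meanSqOsc_nonneg f p) (by positivity))]
  exact (lintegral_pairMeasure_meanSqOsc_div_le hσ hf).trans_lt hG

lemma integral_meanSqOsc_div_le (hσ : 0 ≤ σ) (hf : Continuous f) (hG : gagliardoSq σ f < ⊤) :
    ∫ p, meanSqOsc f p / |p.2| ^ (1 + 2 * σ) ∂pairMeasure ≤ (gagliardoSq σ f).toReal := by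
  rw [integral_eq_lintegral_of_nonneg_ae (ae_of_all _ fun p =>
    div_nonneg (meanSqOsc_nonneg f p) (by positivity))
    (measurable_meanSqOsc_div _ hf).aestronglyMeasurable]
  exact ENNReal.toReal_mono hG.ne (lintegral_pairMeasure_meanSqOsc_div_le hσ hf)

end Weight

/-! ### Chord-arc curves -/

section ClosedCurve

variable {γ : ℝ → Rn n}

lemma smul_segMean_deriv (h : ContDiff ℝ 1 γ) (u w : ℝ) :
    w • segMean (deriv γ) (u, w) = γ (u + w) - γ u := by
  rw [smul_segMean]
  exact intervalIntegral.integral_deriv_eq_sub (fun x _ => h.differentiable one_ne_zero x)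
    ((h.continuous_deriv le_rfl).intervalIntegrable _ _)

lemma arcLen_eq (γ : ℝ → Rn n) (u w : ℝ) :
    arcLen γ u w = |w| * segMean (fun θ => ‖deriv γ θ‖) (u, w) := by
  rw [arcLen, ← smul_segMean, smul_eq_mul, abs_mul, abs_of_nonneg (segMean_norm_nonneg _ _)]

lemma continuous_arcLen (h : ContDiff ℝ 1 γ) : Continuous fun p : ℝ × ℝ => arcLen γ p.1 p.2 := by
  simp only [arcLen_eq]
  exact continuous_snd.abs.mul (continuous_segMean (h.continuous_deriv le_rfl).norm)

lemma arcLen_mul_of_abs_eq_one (γ : ℝ → Rn n) (u : ℝ) {ε w : ℝ} (hε : |ε| = 1) (hw : 0 ≤ w) :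
    arcLen γ u (ε * w) = ∫ θ in (0 : ℝ)..w, ‖deriv γ (u + ε * θ)‖ := by
  have := smul_segMean (fun θ => ‖deriv γ (u + ε * θ)‖) 0 w
  rw [zero_add, smul_eq_mul] at this
  rw [arcLen_eq, abs_mul, hε, one_mul, abs_of_nonneg hw, ← this]
  simp only [segMean, zero_add, mul_left_comm ε]

lemma segMean_deriv_ne_zero (h : ContDiff ℝ 1 γ) (hi : PerInjective γ) (hr : RegularCurve γ)
    (u : ℝ) {w : ℝ} (hw : |w| ≤ 1 / 2) : segMean (deriv γ) (u, w) ≠ 0 := by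
  intro h0
  have chord_eq := smul_segMean_deriv h u w
  rw [h0, smul_zero] at chord_eq
  obtain ⟨k, hk⟩ := hi _ _ (sub_eq_zero.1 chord_eq.symm)
  obtain rfl : w = -(k : ℝ) := by linarith
  have hk1 : |k| < 1 := by
    rw [abs_neg] at hw
    exact_mod_cast hw.trans_lt one_half_lt_one
  rw [Int.abs_lt_one_iff.1 hk1, Int.cast_zero, neg_zero, segMean_zero_right] at h0
  exact hr u h0

lemma exists_pos_le_norm_segMean_deriv (hp : Function.Periodic γ 1) (h : ContDiff ℝ 1 γ)
    (hi : PerInjective γ) (hr : RegularCurve γ) :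
    ∃ c, 0 < c ∧ ∀ u w, |w| ≤ 1 / 2 → c ≤ ‖segMean (deriv γ) (u, w)‖ := by
  obtain ⟨p, hpK, hpm⟩ := (isCompact_Icc (a := (0 : ℝ)) (b := 1)).prod
    (isCompact_Icc (a := -(1 / 2 : ℝ)) (b := 1 / 2)) |>.exists_isMinOn ⟨(0, 0), by norm_num⟩
      (continuous_segMean (h.continuous_deriv le_rfl)).norm.continuousOn
  refine ⟨‖segMean (deriv γ) p‖,
    norm_pos_iff.2 (segMean_deriv_ne_zero h hi hr _ (abs_le.2 hpK.2)), fun u w hw => ?_⟩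
  have periodic_segMean : Function.Periodic (fun u => segMean (deriv γ) (u, w)) 1 := fun u => by
    simp only [segMean, add_right_comm u 1, periodic_deriv hp _]
  obtain ⟨y, hy, hyu⟩ := periodic_segMean.exists_mem_Ico₀ zero_lt_one u
  rw [hyu]
  exact hpm (show (y, w) ∈ _ from ⟨Ico_subset_Icc_self hy, abs_le.1 hw⟩)

end ClosedCurve

/-- `γ` is a closed `C¹` curve of speed at most `M` all of whose chords of parameter width
`w ∈ [-1/2, 1/2]` have length at least `c |w|`; the mean of `γ'` is the chord divided by `w`. -/
structure ChordArc (c M : ℝ) (γ : ℝ → Rn n) : Prop where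
  periodic : Function.Periodic γ 1
  contDiff : ContDiff ℝ 1 γ
  pos : 0 < c
  le_norm : ∀ u w, |w| ≤ 1 / 2 → c ≤ ‖segMean (deriv γ) (u, w)‖
  norm_le : ∀ u, ‖deriv γ u‖ ≤ M

lemma exists_chordArc {γ : ℝ → Rn n} (hp : Function.Periodic γ 1) (h : ContDiff ℝ 1 γ)
    (hi : PerInjective γ) (hr : RegularCurve γ) : ∃ c M, ChordArc c M γ := by
  obtain ⟨c, hc, hle⟩ := exists_pos_le_norm_segMean_deriv hp h hi hr
  obtain ⟨M, hM⟩ := ((periodic_deriv hp).isBounded_of_continuous one_ne_zero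
    (h.continuous_deriv le_rfl)).exists_norm_le
  exact ⟨c, M, hp, h, hc, hle, fun u => hM _ (mem_range_self u)⟩

namespace ChordArc

variable {c M : ℝ} {γ : ℝ → Rn n}

lemma continuous_deriv (h : ChordArc c M γ) : Continuous (deriv γ) :=
  h.contDiff.continuous_deriv le_rfl

lemma le_norm_deriv (h : ChordArc c M γ) (u : ℝ) : c ≤ ‖deriv γ u‖ := by
  simpa [segMean_zero_right] using h.le_norm u 0 (by norm_num)

lemma regularCurve (h : ChordArc c M γ) : RegularCurve γ := fun u =>
  norm_pos_iff.1 (h.pos.trans_le (h.le_norm_deriv u))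

lemma perInjective (h : ChordArc c M γ) : PerInjective γ := by
  intro u v huv
  set k := round (v - u)
  have chord_eq_zero : γ (u + (v - u - k)) - γ u = 0 := by
    have := h.periodic.sub_zsmul_eq (x := v) k
    rw [zsmul_eq_mul, mul_one] at this
    rw [show u + (v - u - k) = v - k by ring, this, huv, sub_self]
  have mean_ne_zero : segMean (deriv γ) (u, v - u - k) ≠ 0 :=
    norm_pos_iff.1 (h.pos.trans_le (h.le_norm u _ (abs_sub_round _)))
  rw [← smul_segMean_deriv h.contDiff, smul_eq_zero_iff_left mean_ne_zero] at chord_eq_zero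
  exact ⟨k, by linarith⟩

lemma add {δ : ℝ} {h : ℝ → Rn n} (hγ : ChordArc c M γ) (hp : Function.Periodic h 1)
    (hc : ContDiff ℝ 1 h) (hδ : ∀ u, ‖deriv h u‖ ≤ δ) (hlt : δ < c) :
    ChordArc (c - δ) (M + δ) (γ + h) := by
  have deriv_eq : deriv (γ + h) = deriv γ + deriv h := funext fun u =>
    deriv_add (hγ.contDiff.differentiable one_ne_zero u) (hc.differentiable one_ne_zero u)
  refine ⟨hγ.periodic.add hp, hγ.contDiff.add hc, sub_pos.2 hlt, fun u w hw => ?_, fun u => ?_⟩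
  · rw [deriv_eq, segMean_add hγ.continuous_deriv (hc.continuous_deriv le_rfl)]
    calc c - δ ≤ ‖segMean (deriv γ) (u, w)‖ - ‖segMean (deriv h) (u, w)‖ :=
          sub_le_sub (hγ.le_norm u w hw) (norm_segMean_le_of_norm_le hδ _)
      _ ≤ _ := norm_sub_le_norm_add _ _
  · rw [deriv_eq]
    exact (norm_add_le _ _).trans (add_le_add (hγ.norm_le u) (hδ u))

lemma mono {c' M' : ℝ} (h : ChordArc c M γ) (hc : c' ≤ c) (h0 : 0 < c') (hM : M ≤ M') :
    ChordArc c' M' γ :=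
  ⟨h.periodic, h.contDiff, h0, fun u w hw => hc.trans (h.le_norm u w hw),
    fun u => (h.norm_le u).trans hM⟩

lemma le_segMean (h : ChordArc c M γ) {u w : ℝ} (hw : |w| ≤ 1 / 2) :
    c ≤ segMean (fun θ => ‖deriv γ θ‖) (u, w) :=
  (h.le_norm u w hw).trans (norm_segMean_le _ _)

lemma curveLen_eq (h : ChordArc c M γ) (u : ℝ) :
    curveLen γ = ∫ θ in u..(u + 1), ‖deriv γ θ‖ := by
  have := ((periodic_deriv h.periodic).comp norm).intervalIntegral_add_eq 0 u
  rwa [zero_add] at this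

lemma le_integral (h : ChordArc c M γ) {a b : ℝ} (hab : a ≤ b) :
    c * (b - a) ≤ ∫ θ in a..b, ‖deriv γ θ‖ := by
  have := intervalIntegral.integral_mono_on (μ := volume) hab
    (intervalIntegrable_const (c := c)) (h.continuous_deriv.norm.intervalIntegrable a b)
    fun θ _ => h.le_norm_deriv θ
  simpa [mul_comm] using this

lemma exists_curveLen_sub_arcLen (h : ChordArc c M γ) (u w : ℝ) :
    ∃ a b, b - a = 1 - |w| ∧ curveLen γ - arcLen γ u w = ∫ θ in a..b, ‖deriv γ θ‖ ∧
      ‖γ b - γ a‖ = ‖γ (u + w) - γ u‖ := by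
  have ii (a b : ℝ) : IntervalIntegrable (fun θ => ‖deriv γ θ‖) volume a b :=
    h.continuous_deriv.norm.intervalIntegrable a b
  have hn {a b : ℝ} (hab : a ≤ b) : 0 ≤ ∫ θ in a..b, ‖deriv γ θ‖ :=
    intervalIntegral.integral_nonneg hab fun _ _ => norm_nonneg _
  rcases le_total 0 w with h0 | h0
  · refine ⟨u + w, u + 1, by rw [abs_of_nonneg h0]; ring, ?_, by rw [h.periodic, norm_sub_rev]⟩
    rw [h.curveLen_eq u, arcLen, abs_of_nonneg (hn (by linarith)),
      intervalIntegral.integral_interval_sub_left (ii _ _) (ii _ _)]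
  · refine ⟨u, u + w + 1, by rw [abs_of_nonpos h0]; ring, ?_, by rw [h.periodic]⟩
    rw [h.curveLen_eq (u + w), arcLen, intervalIntegral.integral_symm (u + w) u, abs_neg,
      abs_of_nonneg (hn (by linarith)),
      intervalIntegral.integral_interval_sub_left (ii _ _) (ii _ _)]

lemma le_curveLen_sub_arcLen (h : ChordArc c M γ) (u : ℝ) {w : ℝ} (hw : |w| ≤ 1 / 2) :
    c / 2 ≤ curveLen γ - arcLen γ u w := by
  obtain ⟨a, b, hab, arc_eq, -⟩ := h.exists_curveLen_sub_arcLen u w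
  calc c / 2 ≤ c * (b - a) := by rw [hab]; nlinarith [h.pos]
    _ ≤ ∫ θ in a..b, ‖deriv γ θ‖ := h.le_integral (by linarith)
    _ = curveLen γ - arcLen γ u w := arc_eq.symm

lemma chord_le_integral (h : ChordArc c M γ) {a b : ℝ} (hab : a ≤ b) :
    ‖γ b - γ a‖ ≤ ∫ θ in a..b, ‖deriv γ θ‖ := by
  rw [← intervalIntegral.integral_deriv_eq_sub
    (fun x _ => h.contDiff.differentiable one_ne_zero x)
    (h.continuous_deriv.intervalIntegrable _ _)]
  exact intervalIntegral.norm_integral_le_integral_norm hab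

lemma chord_le_idist (h : ChordArc c M γ) (u : ℝ) {w : ℝ} (hw : |w| ≤ 1 / 2) :
    ‖γ (u + w) - γ u‖ ≤ idist γ u w := by
  refine le_min ?_ ?_
  · rw [arcLen_eq, ← smul_segMean_deriv h.contDiff, norm_smul, Real.norm_eq_abs]
    exact mul_le_mul_of_nonneg_left (norm_segMean_le _ _) (abs_nonneg w)
  · obtain ⟨a, b, hab, arc_eq, chord_eq⟩ := h.exists_curveLen_sub_arcLen u w
    rw [arc_eq, ← chord_eq]
    exact h.chord_le_integral (by linarith)

end ChordArc

/-! ### A formula for the energy -/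

section DistAntideriv

variable {α L : ℝ}

/-- An antiderivative of `x ↦ (L - x)^(-α) - x^(-α)`, the difference between the inverse powers of
the two arcs into which a closed curve of length `L` is divided. -/
def distAntideriv (α L x : ℝ) : ℝ := ((L - x) ^ (1 - α) + x ^ (1 - α)) / (α - 1)

lemma hasDerivAt_distAntideriv {x : ℝ} (hα : 1 < α) (h0 : 0 < x) (hL : x < L) :
    HasDerivAt (distAntideriv α L) ((L - x) ^ (-α) - x ^ (-α)) x := by
  have h1 : HasDerivAt (fun x => (L - x) ^ (1 - α)) ((-1) * (1 - α) * (L - x) ^ (1 - α - 1)) x :=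
    ((hasDerivAt_id x).const_sub L).rpow_const (Or.inl (sub_pos.2 hL).ne')
  have h2 : HasDerivAt (fun x => x ^ (1 - α)) (1 * (1 - α) * x ^ (1 - α - 1)) x :=
    (hasDerivAt_id x).rpow_const (Or.inl h0.ne')
  refine ((h1.add h2).div_const (α - 1)).congr_deriv ?_
  have h3 : α - 1 ≠ 0 := (sub_pos.2 hα).ne'
  rw [show 1 - α - 1 = -α by ring]
  field_simp; ring

lemma inv_min_rpow_sub_inv_rpow (α : ℝ) {x : ℝ} (h0 : 0 ≤ x) (hL : x ≤ L) :
    1 / min x (L - x) ^ α - 1 / x ^ α = (L - max x (L / 2)) ^ (-α) - max x (L / 2) ^ (-α) := by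
  rcases le_total x (L / 2) with h | h
  · rw [max_eq_right h, min_eq_left (by linarith), sub_self, sub_half, sub_self]
  · rw [max_eq_left h, min_eq_right (by linarith), Real.rpow_neg (by linarith),
      Real.rpow_neg (by linarith), one_div, one_div]

lemma continuousOn_sub_max_rpow (α : ℝ) (hL : 0 < L) :
    ContinuousOn (fun x => (L - max x (L / 2)) ^ (-α) - max x (L / 2) ^ (-α)) (Iio L) := by
  have max_lt_of_lt (x : ℝ) (hx : x < L) : max x (L / 2) < L := max_lt hx (by linarith)
  refine ContinuousOn.sub (ContinuousOn.rpow_const (by fun_prop) fun x hx => Or.inl ?_)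
    (ContinuousOn.rpow_const (by fun_prop) fun x _ => Or.inl ?_)
  · exact (sub_pos.2 (max_lt_of_lt x hx)).ne'
  · exact ((half_pos hL).trans_le (le_max_right _ _)).ne'

lemma integral_sub_max_rpow (hα : 1 < α) (hL : 0 < L) {s : ℝ} (h0 : 0 ≤ s) (hs : s < L) :
    ∫ x in (0 : ℝ)..s, ((L - max x (L / 2)) ^ (-α) - max x (L / 2) ^ (-α)) =
      distAntideriv α L (max s (L / 2)) - distAntideriv α L (L / 2) := by
  have hderiv (x : ℝ) (hx : L / 2 ≤ x) (hxL : x < L) :=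
    hasDerivAt_distAntideriv hα ((half_pos hL).trans_le hx) hxL
  have hcont : ContinuousOn (fun x => distAntideriv α L (max x (L / 2))) (Icc 0 s) := fun x hx =>
    (ContinuousAt.comp' (f := fun x => max x (L / 2)) (hderiv _ (le_max_right x _)
      (max_lt (hx.2.trans_lt hs) (half_lt_self hL))).continuousAt
      (by fun_prop)).continuousWithinAt
  have right_deriv (x : ℝ) (hx : x ∈ Ioo 0 s) :
      HasDerivWithinAt (fun x => distAntideriv α L (max x (L / 2)))
        ((L - max x (L / 2)) ^ (-α) - max x (L / 2) ^ (-α)) (Ioi x) x := by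
    rcases lt_or_ge x (L / 2) with h | h
    · rw [max_eq_right h.le, sub_half, sub_self]
      refine (HasDerivAt.congr_of_eventuallyEq
        (hasDerivAt_const x (distAntideriv α L (L / 2))) ?_).hasDerivWithinAt
      filter_upwards [Iio_mem_nhds h] with y hy
      rw [max_eq_right (le_of_lt hy)]
    · rw [max_eq_left h]
      refine (hderiv x h (hx.2.trans hs)).hasDerivWithinAt.congr (fun y hy => ?_) ?_
      · rw [max_eq_left (h.trans (le_of_lt hy))]
      · rw [max_eq_left h]
  rw [intervalIntegral.integral_eq_sub_of_hasDeriv_right_of_le h0 hcont right_deriv,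
    max_eq_right (half_pos hL).le]
  refine ContinuousOn.intervalIntegrable ((continuousOn_sub_max_rpow α hL).mono ?_)
  rw [uIcc_of_le h0]
  exact fun x hx => hx.2.trans_lt hs

lemma integral_inv_min_rpow (hα : 1 < α) (hL : 0 < L) {ρ : ℝ → ℝ} (hρ : Continuous ρ)
    (h0 : ∀ w, 0 ≤ ρ w) {l : ℝ} (hl : 0 ≤ l) (hs : ∫ θ in (0 : ℝ)..l, ρ θ < L) :
    ∫ w in (0 : ℝ)..l, (1 / min (∫ θ in (0 : ℝ)..w, ρ θ) (L - ∫ θ in (0 : ℝ)..w, ρ θ) ^ α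
        - 1 / (∫ θ in (0 : ℝ)..w, ρ θ) ^ α) * ρ w =
      distAntideriv α L (max (∫ θ in (0 : ℝ)..l, ρ θ) (L / 2)) - distAntideriv α L (L / 2) := by
  set a : ℝ → ℝ := fun w => ∫ θ in (0 : ℝ)..w, ρ θ
  have ha (w : ℝ) : HasDerivAt a (ρ w) w :=
    intervalIntegral.integral_hasDerivAt_right (hρ.intervalIntegrable _ _)
      (hρ.stronglyMeasurableAtFilter _ _) hρ.continuousAt
  have ha0 : ∀ {w}, 0 ≤ w → 0 ≤ a w := fun hw =>
    intervalIntegral.integral_nonneg hw fun θ _ => h0 θ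
  have haL : ∀ w ∈ uIcc 0 l, 0 ≤ a w ∧ a w < L := by
    rw [uIcc_of_le hl]
    exact fun w hw => ⟨ha0 hw.1, (intervalIntegral.integral_mono_interval le_rfl hw.1 hw.2
      (ae_of_all _ h0) (hρ.intervalIntegrable _ _)).trans_lt hs⟩
  calc ∫ w in (0 : ℝ)..l, (1 / min (a w) (L - a w) ^ α - 1 / (a w) ^ α) * ρ w
      = ∫ w in (0 : ℝ)..l,
          ((fun x => (L - max x (L / 2)) ^ (-α) - max x (L / 2) ^ (-α)) ∘ a) w * ρ w :=
        intervalIntegral.integral_congr fun w hw => congrArg (· * ρ w)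
          (inv_min_rpow_sub_inv_rpow α (haL w hw).1 (haL w hw).2.le)
    _ = ∫ x in a 0..a l, ((L - max x (L / 2)) ^ (-α) - max x (L / 2) ^ (-α)) :=
        intervalIntegral.integral_comp_mul_deriv' (fun x _ => ha x) hρ.continuousOn
          ((continuousOn_sub_max_rpow α hL).mono (image_subset_iff.2 fun w hw => (haL w hw).2))
    _ = _ := by
        rw [show a 0 = 0 from intervalIntegral.integral_same,
          integral_sub_max_rpow hα hL (ha0 hl) hs]

/-- The integral of `ohRest` in the second variable, in terms of the lengths `x`, `y` of the two
arcs of parameter width `1/2`. -/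
def halfArcTerm (α x y : ℝ) : ℝ :=
  (y ^ (1 - α) + x ^ (1 - α) - 2 * ((x + y) / 2) ^ (1 - α)) / (α - 1)

lemma distAntideriv_max_add (α x y : ℝ) :
    distAntideriv α (x + y) (max x ((x + y) / 2)) - distAntideriv α (x + y) ((x + y) / 2) +
        (distAntideriv α (x + y) (max y ((x + y) / 2)) -
          distAntideriv α (x + y) ((x + y) / 2)) =
      halfArcTerm α x y := by
  unfold halfArcTerm
  rcases le_total x y with h | h
  · rw [max_eq_right (show x ≤ (x + y) / 2 by linarith),
      max_eq_left (show (x + y) / 2 ≤ y by linarith)]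
    simp only [distAntideriv, sub_half, add_sub_cancel_right]
    ring
  · rw [max_eq_left (show (x + y) / 2 ≤ x by linarith),
      max_eq_right (show y ≤ (x + y) / 2 by linarith)]
    simp only [distAntideriv, sub_half, add_sub_cancel_left]
    ring

end DistAntideriv

/-- The part of the energy integrand coming from the chord-arc defect. -/
def ohMain (α : ℝ) (γ : ℝ → Rn n) (p : ℝ × ℝ) : ℝ :=
  (1 / |p.2| ^ α) * ((‖segMean (deriv γ) p‖ ^ (-α) - segMean (fun θ => ‖deriv γ θ‖) p ^ (-α)) *
    (‖deriv γ p.1‖ * ‖deriv γ (p.1 + p.2)‖))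

/-- The part of the energy integrand, without the factor `|γ'(u)|`, that accounts for the intrinsic
distance being the length of the shorter arc; it is bounded. -/
def ohRest (α : ℝ) (γ : ℝ → Rn n) (u w : ℝ) : ℝ :=
  (1 / idist γ u w ^ α - 1 / arcLen γ u w ^ α) * ‖deriv γ (u + w)‖

/-- The total contribution of `ohRest` to the energy. -/
def halfArcEnergy (α : ℝ) (γ : ℝ → Rn n) : ℝ :=
  ∫ u in (0 : ℝ)..1, ‖deriv γ u‖ * halfArcTerm α (arcLen γ u (1 / 2)) (arcLen γ u (-1 / 2))

lemma measurable_ohMain (α : ℝ) {γ : ℝ → Rn n} (h : ContDiff ℝ 1 γ) :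
    Measurable (ohMain α γ) := by
  have hc := h.continuous_deriv le_rfl
  refine Measurable.mul (Measurable.const_div
    ((continuous_abs.comp continuous_snd).measurable.pow_const _) _) (Measurable.mul ?_ ?_)
  · exact ((continuous_segMean hc).norm.measurable.pow_const _).sub
      ((continuous_segMean hc.norm).measurable.pow_const _)
  · exact Continuous.measurable (by fun_prop)

lemma ohIntegrand_eq (α : ℝ) {γ : ℝ → Rn n} (h : ContDiff ℝ 1 γ) (u w : ℝ) :
    ohIntegrand α γ u w = ohMain α γ (u, w) - ‖deriv γ u‖ * ohRest α γ u w := by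
  have defect_eq : 1 / ‖γ (u + w) - γ u‖ ^ α - 1 / arcLen γ u w ^ α = (1 / |w| ^ α) *
      (‖segMean (deriv γ) (u, w)‖ ^ (-α) - segMean (fun θ => ‖deriv γ θ‖) (u, w) ^ (-α)) := by
    rw [arcLen_eq, ← smul_segMean_deriv h, norm_smul, Real.norm_eq_abs,
      Real.mul_rpow (abs_nonneg w) (norm_nonneg _),
      Real.mul_rpow (abs_nonneg w) (segMean_norm_nonneg _ _), Real.rpow_neg (norm_nonneg _),
      Real.rpow_neg (segMean_norm_nonneg _ _), one_div, one_div, one_div, mul_inv, mul_inv]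
    ring
  unfold ohIntegrand ohMain ohRest
  rw [← mul_assoc (1 / |w| ^ α), ← defect_eq]
  ring

lemma measurable_ohRest (α : ℝ) {γ : ℝ → Rn n} (h : ContDiff ℝ 1 γ) :
    Measurable fun p : ℝ × ℝ => ohRest α γ p.1 p.2 := by
  have := h.continuous_deriv le_rfl
  have ha := continuous_arcLen h
  have hi : Continuous fun p : ℝ × ℝ => idist γ p.1 p.2 := ha.min (continuous_const.sub ha)
  refine Measurable.mul (Measurable.sub ?_ ?_) (Continuous.measurable (by fun_prop))
  · exact (hi.measurable.pow_const _).const_div _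
  · exact (ha.measurable.pow_const _).const_div _

lemma ae_pairMeasure_abs_lt : ∀ᵐ p ∂pairMeasure, |p.2| < 1 / 2 := by
  rw [pairMeasure, Measure.prod_restrict]
  filter_upwards [ae_restrict_mem (measurableSet_Ioc.prod measurableSet_Ioo)] with p hp
  rw [neg_div] at hp
  exact abs_lt.2 hp.2

namespace ChordArc

variable {c M α : ℝ} {γ : ℝ → Rn n}

lemma abs_ohRest_le (hα : 0 ≤ α) (h : ChordArc c M γ) (u : ℝ) {w : ℝ} (hw : |w| ≤ 1 / 2) :
    |ohRest α γ u w| ≤ 1 / (c / 2) ^ α * M := by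
  have hc : 0 < c / 2 := half_pos h.pos
  have hL := h.le_curveLen_sub_arcLen u hw
  unfold ohRest
  rw [abs_mul, abs_norm]
  refine mul_le_mul ?_ (h.norm_le _) (norm_nonneg _) (by positivity)
  rcases le_total (arcLen γ u w) (curveLen γ - arcLen γ u w) with hle | hle
  · rw [idist, min_eq_left hle, sub_self, abs_zero]; positivity
  · rw [idist, min_eq_right hle,
      abs_of_nonneg (sub_nonneg.2 (one_div_le_one_div_of_le (Real.rpow_pos_of_pos
        (hc.trans_le hL) α) (Real.rpow_le_rpow (hc.le.trans hL) hle hα)))]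
    calc 1 / (curveLen γ - arcLen γ u w) ^ α - 1 / arcLen γ u w ^ α
        ≤ 1 / (curveLen γ - arcLen γ u w) ^ α :=
          sub_le_self _ (one_div_nonneg.2 (Real.rpow_nonneg (hc.le.trans (hL.trans hle)) α))
      _ ≤ 1 / (c / 2) ^ α := by gcongr

lemma ohIntegrand_nonneg (hα : 0 < α) (h : ChordArc c M γ) (u : ℝ) {w : ℝ}
    (hw : |w| ≤ 1 / 2) : 0 ≤ ohIntegrand α γ u w := by
  unfold ohIntegrand
  rcases eq_or_ne w 0 with rfl | hw0
  · have hL := h.le_curveLen_sub_arcLen u (w := 0) (by norm_num)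
    have arcLen_zero : arcLen γ u 0 = 0 := by simp [arcLen]
    have idist_zero : idist γ u 0 = 0 := by
      rw [idist, arcLen_zero, min_eq_left (by rw [arcLen_zero] at hL; linarith [h.pos])]
    simp [idist_zero]
  · refine mul_nonneg (mul_nonneg (sub_nonneg.2 (one_div_le_one_div_of_le ?_ ?_))
      (norm_nonneg _)) (norm_nonneg _)
    · refine Real.rpow_pos_of_pos ?_ _
      rw [← smul_segMean_deriv h.contDiff, norm_smul]
      exact mul_pos (norm_pos_iff.2 hw0) (h.pos.trans_le (h.le_norm u w hw))
    · exact Real.rpow_le_rpow (norm_nonneg _) (h.chord_le_idist u hw) hα.le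

lemma intervalIntegrable_ohRest (hα : 0 ≤ α) (h : ChordArc c M γ) (u : ℝ) {a b : ℝ}
    (ha : -(1 / 2) ≤ a) (hab : a ≤ b) (hb : b ≤ 1 / 2) :
    IntervalIntegrable (ohRest α γ u) volume a b := by
  rw [intervalIntegrable_iff_integrableOn_Ioc_of_le hab]
  refine Measure.integrableOn_of_bounded (M := 1 / (c / 2) ^ α * M) (by simp)
    ((measurable_ohRest α h.contDiff).comp
      (measurable_prodMk_left (x := u))).aestronglyMeasurable
    ((ae_restrict_iff' measurableSet_Ioc).2 (ae_of_all _ fun w hw => ?_))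
  exact h.abs_ohRest_le hα u (abs_le.2 ⟨by linarith [hw.1], by linarith [hw.2]⟩)

lemma curveLen_eq_add_arcLen (h : ChordArc c M γ) (u : ℝ) :
    curveLen γ = arcLen γ u (1 / 2) + arcLen γ u (-1 / 2) := by
  have ii (a b : ℝ) : IntervalIntegrable (fun θ => ‖deriv γ θ‖) volume a b :=
    h.continuous_deriv.norm.intervalIntegrable a b
  have hn {a b : ℝ} (hab : a ≤ b) : 0 ≤ ∫ θ in a..b, ‖deriv γ θ‖ :=
    intervalIntegral.integral_nonneg hab fun _ _ => norm_nonneg _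
  rw [arcLen, arcLen, intervalIntegral.integral_symm (u + -1 / 2), abs_neg,
    abs_of_nonneg (hn (by linarith)), abs_of_nonneg (hn (by linarith)), add_comm,
    intervalIntegral.integral_add_adjacent_intervals (ii _ _) (ii _ _),
    h.curveLen_eq (u + -1 / 2)]
  congr 1; ring

lemma arcLen_pos (h : ChordArc c M γ) (u : ℝ) {w : ℝ} (hw0 : w ≠ 0) (hw : |w| ≤ 1 / 2) :
    0 < arcLen γ u w := by
  rw [arcLen_eq]
  exact mul_pos (abs_pos.2 hw0) (h.pos.trans_le (h.le_segMean hw))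

lemma integral_ohRest_mul (hα : 1 < α) (h : ChordArc c M γ) (u : ℝ) {ε : ℝ} (hε : |ε| = 1)
    (hL : arcLen γ u (ε * (1 / 2)) < curveLen γ) :
    ∫ w in (0 : ℝ)..(1 / 2), ohRest α γ u (ε * w) =
      distAntideriv α (curveLen γ) (max (arcLen γ u (ε * (1 / 2))) (curveLen γ / 2)) -
        distAntideriv α (curveLen γ) (curveLen γ / 2) := by
  have hd := h.continuous_deriv
  have curveLen_pos : 0 < curveLen γ := (abs_nonneg _).trans_lt hL
  rw [arcLen_mul_of_abs_eq_one γ u hε (by norm_num)] at hL ⊢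
  rw [← integral_inv_min_rpow hα curveLen_pos (by fun_prop) (fun _ => norm_nonneg _)
    (by norm_num) hL]
  refine intervalIntegral.integral_congr fun w hw => ?_
  rw [uIcc_of_le (by norm_num)] at hw
  simp only [ohRest, idist, arcLen_mul_of_abs_eq_one γ u hε hw.1]

lemma integral_ohRest (hα : 1 < α) (h : ChordArc c M γ) (u : ℝ) :
    ∫ w in Ioo (-(1 : ℝ) / 2) (1 / 2), ohRest α γ u w =
      halfArcTerm α (arcLen γ u (1 / 2)) (arcLen γ u (-1 / 2)) := by
  have hα0 : 0 ≤ α := by linarith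
  have hL := h.curveLen_eq_add_arcLen u
  have right_pos : 0 < arcLen γ u (1 / 2) := h.arcLen_pos u (by norm_num) (by norm_num)
  have left_pos : 0 < arcLen γ u (-1 / 2) := h.arcLen_pos u (by norm_num) (by norm_num)
  have right_half := h.integral_ohRest_mul hα u (ε := 1) (by norm_num)
    (by rw [one_mul]; linarith)
  have left_half := h.integral_ohRest_mul hα u (ε := -1) (by norm_num)
    (by rw [neg_one_mul, ← neg_div]; linarith)
  simp only [one_mul, neg_one_mul, intervalIntegral.integral_comp_neg, neg_zero]
    at right_half left_half
  rw [← integral_Ioc_eq_integral_Ioo, ← intervalIntegral.integral_of_le (by norm_num), neg_div,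
    ← intervalIntegral.integral_add_adjacent_intervals (b := 0)
      (h.intervalIntegrable_ohRest hα0 u le_rfl (by norm_num) (by norm_num))
      (h.intervalIntegrable_ohRest hα0 u (by norm_num) (by norm_num) le_rfl),
    left_half, right_half, add_comm, hL, ← neg_div, distAntideriv_max_add]

lemma integrable_ohRest (hα : 0 ≤ α) (h : ChordArc c M γ) :
    Integrable (fun p : ℝ × ℝ => ‖deriv γ p.1‖ * ohRest α γ p.1 p.2) pairMeasure := by
  have hd := h.continuous_deriv
  refine Integrable.of_bound ((Continuous.measurable (by fun_prop)).mul
    (measurable_ohRest α h.contDiff)).aestronglyMeasurable (M * (1 / (c / 2) ^ α * M)) ?_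
  filter_upwards [ae_pairMeasure_abs_lt] with p hp
  rw [norm_mul, norm_norm]
  exact mul_le_mul (h.norm_le _) (h.abs_ohRest_le hα p.1 hp.le) (norm_nonneg _)
    ((norm_nonneg _).trans (h.norm_le p.1))

lemma integral_norm_mul_ohRest (hα : 1 < α) (h : ChordArc c M γ) :
    ∫ p, ‖deriv γ p.1‖ * ohRest α γ p.1 p.2 ∂pairMeasure = halfArcEnergy α γ := by
  rw [pairMeasure, integral_prod _ (h.integrable_ohRest (by linarith)), halfArcEnergy,
    intervalIntegral.integral_of_le zero_le_one]
  simp only [integral_const_mul, h.integral_ohRest hα]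

lemma ae_ohMain_sub_nonneg (hα : 0 < α) (h : ChordArc c M γ) :
    ∀ᵐ p ∂pairMeasure, 0 ≤ ohMain α γ p - ‖deriv γ p.1‖ * ohRest α γ p.1 p.2 := by
  filter_upwards [ae_pairMeasure_abs_lt] with p hp
  rw [← ohIntegrand_eq α h.contDiff]
  exact h.ohIntegrand_nonneg hα p.1 hp.le

lemma oharaE_eq (hα : 1 < α) (h : ChordArc c M γ) (hint : Integrable (ohMain α γ) pairMeasure) :
    oharaE α γ = ENNReal.ofReal ((∫ p, ohMain α γ p ∂pairMeasure) - halfArcEnergy α γ) := by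
  have hd := h.continuous_deriv
  have hr := h.integrable_ohRest (α := α) (by linarith)
  have hm : Measurable fun p : ℝ × ℝ => ohMain α γ p - ‖deriv γ p.1‖ * ohRest α γ p.1 p.2 :=
    (measurable_ohMain α h.contDiff).sub ((Continuous.measurable (by fun_prop)).mul
      (measurable_ohRest α h.contDiff))
  rw [← h.integral_norm_mul_ohRest hα, ← integral_sub hint hr,
    ofReal_integral_eq_lintegral_ofReal (by exact hint.sub hr)
      (h.ae_ohMain_sub_nonneg (by linarith)),
    pairMeasure, lintegral_prod _ hm.ennreal_ofReal.aemeasurable]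
  simp only [oharaE, ohIntegrand_eq α h.contDiff]

lemma oharaER_eq (hα : 1 < α) (h : ChordArc c M γ)
    (hint : Integrable (ohMain α γ) pairMeasure) :
    oharaER α γ = (∫ p, ohMain α γ p ∂pairMeasure) - halfArcEnergy α γ := by
  rw [oharaER, h.oharaE_eq hα hint, ENNReal.toReal_ofReal]
  rw [← h.integral_norm_mul_ohRest hα,
    ← integral_sub hint (h.integrable_ohRest (by linarith))]
  exact integral_nonneg_of_ae (h.ae_ohMain_sub_nonneg (by linarith))

end ChordArc

/-! ### Second differences of the energy -/

/-- The four vertices `x + i y + j z`, `i, j ∈ {0, 1}`, of the parallelogram at `x` spanned by `y`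
and `z`; applied to functions, the four corners of a two-parameter variation. -/
def parallelogram {V : Type*} [AddZeroClass V] (x y z : V) (i j : Bool) : V :=
  x + cond i y 0 + cond j z 0

lemma parallelogram_apply {X V : Type*} [AddZeroClass V] (f g h : X → V) (i j : Bool) (x : X) :
    parallelogram f g h i j x = parallelogram (f x) (g x) (h x) i j := by
  cases i <;> cases j <;> rfl

lemma parallelogram_sub {V : Type*} [AddCommGroup V] (x y z x' y' z' : V) (i j : Bool) :
    parallelogram x y z i j - parallelogram x' y' z' i j =
      parallelogram (x - x') (y - y') (z - z') i j := by
  cases i <;> cases j <;> simp only [parallelogram, cond_true, cond_false, add_zero] <;> abel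

lemma deriv_parallelogram {E : Type*} [NormedAddCommGroup E] [NormedSpace ℝ E] {f g h : ℝ → E}
    (hf : Differentiable ℝ f) (hg : Differentiable ℝ g) (hh : Differentiable ℝ h) (i j : Bool) :
    deriv (parallelogram f g h i j) = parallelogram (deriv f) (deriv g) (deriv h) i j := by
  ext u
  cases i <;> cases j <;>
    simp [parallelogram, deriv_add, (hf u), (hg u), (hh u), (hf u).add (hg u)]

section Parallelogram

variable {E : Type*} [NormedAddCommGroup E] {κ a b : ℝ} {x y z : E}

lemma squareBound_parallelogram (h : ‖x‖ + ‖y‖ + ‖z‖ ≤ κ) (hy : ‖y‖ ≤ κ * a) (hz : ‖z‖ ≤ κ * b)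
    (ha : 0 ≤ a) (hb : 0 ≤ b) : SquareBound κ a b (parallelogram x y z) where
  norm_le i j := by
    refine norm_add₃_le.trans (le_trans ?_ h)
    gcongr <;> [cases i; cases j] <;> simp
  norm_fst_le j := by simpa [parallelogram] using hy
  norm_snd_le i := by simpa [parallelogram] using hz
  norm_mixed_le := by
    have hκ : 0 ≤ κ := by linarith [norm_nonneg x, norm_nonneg y, norm_nonneg z]
    have : 0 ≤ κ * a * b := by positivity
    simpa [parallelogram, add_assoc] using this

/-- The junk value `‖y‖ ^ 2 / 0 ^ 2 = 0` is where the implications come from. -/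
lemma squareBound_parallelogram_sqrt (ha : 0 ≤ a) (ha1 : a ≤ 1) (hb : 0 ≤ b) (hb1 : b ≤ 1)
    (hy : a = 0 → y = 0) (hz : b = 0 → z = 0) :
    SquareBound (3 * √(‖x‖ ^ 2 + ‖y‖ ^ 2 / a ^ 2 + ‖z‖ ^ 2 / b ^ 2)) a b
      (parallelogram x y z) := by
  set q := ‖x‖ ^ 2 + ‖y‖ ^ 2 / a ^ 2 + ‖z‖ ^ 2 / b ^ 2
  have hx₀ : 0 ≤ ‖x‖ ^ 2 := by positivity
  have hy₀ : 0 ≤ ‖y‖ ^ 2 / a ^ 2 := by positivity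
  have hz₀ : 0 ≤ ‖z‖ ^ 2 / b ^ 2 := by positivity
  have norm_x : ‖x‖ ≤ √q := Real.le_sqrt_of_sq_le (by linarith)
  have norm_y : ‖y‖ ≤ √q * a := by
    rw [← div_mul_cancel_of_imp fun h => norm_eq_zero.2 (hy h)]
    gcongr
    exact Real.le_sqrt_of_sq_le (by rw [div_pow]; linarith)
  have norm_z : ‖z‖ ≤ √q * b := by
    rw [← div_mul_cancel_of_imp fun h => norm_eq_zero.2 (hz h)]
    gcongr
    exact Real.le_sqrt_of_sq_le (by rw [div_pow]; linarith)
  have hq₀ := Real.sqrt_nonneg q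
  refine squareBound_parallelogram ?_ ?_ ?_ ha hb <;> nlinarith

end Parallelogram

/-- The curves `γ + i h + j k`, `i, j ∈ {0, 1}`, are chord-arc curves with the same constants, and
`a ≤ 1` and `b ≤ 1` bound the velocities of `h` and `k`. -/
structure ChordArcFamily (c M a b : ℝ) (γ h k : ℝ → Rn n) : Prop where
  chordArc : ∀ i j, ChordArc c M (parallelogram γ h k i j)
  contDiff : ContDiff ℝ 1 γ
  contDiff_fst : ContDiff ℝ 1 h
  contDiff_snd : ContDiff ℝ 1 k
  norm_fst_le : ∀ u, ‖deriv h u‖ ≤ a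
  norm_snd_le : ∀ u, ‖deriv k u‖ ≤ b
  fst_le_one : a ≤ 1
  snd_le_one : b ≤ 1

/-- The mean square oscillation of the velocities of `γ`, `h / a` and `k / b`; the junk value of
the quotients at `a = 0` or `b = 0` is harmless in a `ChordArcFamily`. -/
def familySqOsc (a b : ℝ) (γ h k : ℝ → Rn n) (p : ℝ × ℝ) : ℝ :=
  meanSqOsc (deriv γ) p + meanSqOsc (deriv h) p / a ^ 2 + meanSqOsc (deriv k) p / b ^ 2

namespace ChordArcFamily

variable {c M a b : ℝ} {γ h k : ℝ → Rn n}

lemma nonneg_fst (H : ChordArcFamily c M a b γ h k) : 0 ≤ a :=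
  (norm_nonneg _).trans (H.norm_fst_le 0)

lemma nonneg_snd (H : ChordArcFamily c M a b γ h k) : 0 ≤ b :=
  (norm_nonneg _).trans (H.norm_snd_le 0)

lemma deriv_eq (H : ChordArcFamily c M a b γ h k) (i j : Bool) (u : ℝ) :
    deriv (parallelogram γ h k i j) u = parallelogram (deriv γ u) (deriv h u) (deriv k u) i j := by
  rw [deriv_parallelogram (H.contDiff.differentiable one_ne_zero)
    (H.contDiff_fst.differentiable one_ne_zero) (H.contDiff_snd.differentiable one_ne_zero),
    parallelogram_apply]

lemma norm_le (H : ChordArcFamily c M a b γ h k) (u : ℝ) : ‖deriv γ u‖ ≤ M := by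
  simpa [parallelogram] using (H.chordArc false false).norm_le u

lemma squareBound_velocity (H : ChordArcFamily c M a b γ h k) (u : ℝ) :
    SquareBound (M + 2) a b (fun i j => deriv (parallelogram γ h k i j) u) := by
  have hM := (norm_nonneg _).trans (H.norm_le u)
  have ha := H.nonneg_fst
  have hb := H.nonneg_snd
  simp only [H.deriv_eq]
  refine squareBound_parallelogram ?_ ((H.norm_fst_le u).trans ?_) ((H.norm_snd_le u).trans ?_)
    ha hb
  · linarith [H.norm_le u, H.norm_fst_le u, H.norm_snd_le u, H.fst_le_one, H.snd_le_one]
  · nlinarith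
  · nlinarith

lemma squareBound_velocity_sub (H : ChordArcFamily c M a b γ h k) (u v : ℝ) :
    SquareBound (3 * √(‖deriv γ u - deriv γ v‖ ^ 2 + ‖deriv h u - deriv h v‖ ^ 2 / a ^ 2
        + ‖deriv k u - deriv k v‖ ^ 2 / b ^ 2)) a b
      (fun i j => deriv (parallelogram γ h k i j) u - deriv (parallelogram γ h k i j) v) := by
  have sub_eq_zero_of {f : ℝ → Rn n} {e : ℝ} (hf : ∀ u, ‖f u‖ ≤ e) (he : e = 0) :
      f u - f v = 0 := by
    rw [norm_le_zero_iff.1 ((hf u).trans_eq he), norm_le_zero_iff.1 ((hf v).trans_eq he), sub_self]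
  simp only [H.deriv_eq, parallelogram_sub]
  exact squareBound_parallelogram_sqrt H.nonneg_fst H.fst_le_one H.nonneg_snd H.snd_le_one
    (sub_eq_zero_of H.norm_fst_le) (sub_eq_zero_of H.norm_snd_le)

lemma segmentBound (H : ChordArcFamily c M a b γ h k) (p : ℝ × ℝ) (hp : |p.2| ≤ 1 / 2) :
    SegmentBound c (M + 2) a b
      (fun s => 3 * √(‖deriv γ (p.1 + s * p.2) - deriv γ p.1‖ ^ 2
        + ‖deriv h (p.1 + s * p.2) - deriv h p.1‖ ^ 2 / a ^ 2
        + ‖deriv k (p.1 + s * p.2) - deriv k p.1‖ ^ 2 / b ^ 2))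
      (fun i j s => deriv (parallelogram γ h k i j) (p.1 + s * p.2)) where
  nonneg_fst := H.nonneg_fst
  nonneg_snd := H.nonneg_snd
  continuous i j := (H.chordArc i j).continuous_deriv.comp (by fun_prop)
  continuous_osc := by
    have hγ := H.contDiff.continuous_deriv le_rfl
    have hh := H.contDiff_fst.continuous_deriv le_rfl
    have hk := H.contDiff_snd.continuous_deriv le_rfl
    fun_prop
  velocity s _ := H.squareBound_velocity _
  osc s _ := by
    simp only [zero_mul, add_zero]
    exact H.squareBound_velocity_sub _ _
  le_norm i j s _ := (H.chordArc i j).le_norm_deriv _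
  le_norm_integral i j := (H.chordArc i j).le_norm p.1 p.2 hp

lemma integral_osc_sq (H : ChordArcFamily c M a b γ h k) (p : ℝ × ℝ) :
    ∫ s in (0 : ℝ)..1, (3 * √(‖deriv γ (p.1 + s * p.2) - deriv γ p.1‖ ^ 2
        + ‖deriv h (p.1 + s * p.2) - deriv h p.1‖ ^ 2 / a ^ 2
        + ‖deriv k (p.1 + s * p.2) - deriv k p.1‖ ^ 2 / b ^ 2)) ^ 2 =
      9 * familySqOsc a b γ h k p := by
  have integrable {f : ℝ → Rn n} (hf : ContDiff ℝ 1 f) : IntervalIntegrable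
      (fun s => ‖deriv f (p.1 + s * p.2) - deriv f p.1‖ ^ 2) volume 0 1 := by
    have := hf.continuous_deriv le_rfl
    exact Continuous.intervalIntegrable (by fun_prop) _ _
  have hγ := integrable H.contDiff
  have hh := (integrable H.contDiff_fst).div_const (a ^ 2)
  have hk := (integrable H.contDiff_snd).div_const (b ^ 2)
  simp_rw [mul_pow]
  rw [intervalIntegral.integral_const_mul, familySqOsc]
  conv_lhs => enter [2, 1, s]; rw [Real.sq_sqrt (by positivity)]
  rw [intervalIntegral.integral_add (hγ.add hh) hk, intervalIntegral.integral_add hγ hh,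
    intervalIntegral.integral_div, intervalIntegral.integral_div]
  norm_num [meanSqOsc]

variable (n) (hc : 0 < c) (M)
include hc

lemma exists_squareBound_segMean : ∃ C, 0 ≤ C ∧ ∀ {a b : ℝ} {γ h k : ℝ → Rn n},
    ChordArcFamily c M a b γ h k → ∀ p : ℝ × ℝ, |p.2| ≤ 1 / 2 →
    SquareBound C a b (fun i j => segMean (fun θ => ‖deriv (parallelogram γ h k i j) θ‖) p) := by
  obtain ⟨C, hC, bound⟩ := SegmentBound.exists_squareBound_integral_norm (Rn n) (M + 2) hc
  exact ⟨C, hC, fun H p hp => bound (H.segmentBound p hp)⟩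

lemma exists_squareBound_ohMain (α : ℝ) : ∃ C, 0 ≤ C ∧ ∀ {a b : ℝ} {γ h k : ℝ → Rn n},
    ChordArcFamily c M a b γ h k → ∀ p : ℝ × ℝ, |p.2| ≤ 1 / 2 →
    SquareBound (C * (familySqOsc a b γ h k p / |p.2| ^ α)) a b
      (fun i j => ohMain α (parallelogram γ h k i j) p) := by
  obtain ⟨C, hC, bound⟩ := SegmentBound.exists_squareBound_energy (Rn n) (M + 2) hc (-α)
  refine ⟨9 * C, by positivity, fun H p hp => ?_⟩
  have key := (bound (H.segmentBound p hp)).const_smul (1 / |p.2| ^ α)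
  rw [H.integral_osc_sq, abs_of_nonneg (by positivity)] at key
  simp only [zero_mul, one_mul, add_zero, smul_eq_mul] at key
  exact key.mono (le_of_eq (by ring)) H.nonneg_fst H.nonneg_snd

lemma exists_squareBound_arcLen : ∃ C, 0 ≤ C ∧ ∀ {a b : ℝ} {γ h k : ℝ → Rn n},
    ChordArcFamily c M a b γ h k → ∀ u w : ℝ, |w| ≤ 1 / 2 →
    SquareBound C a b (fun i j => arcLen (parallelogram γ h k i j) u w) := by
  obtain ⟨C, hC, bound⟩ := exists_squareBound_segMean n M hc
  refine ⟨C, hC, fun H u w hw => ?_⟩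
  simp only [arcLen_eq]
  refine ((bound H (u, w) hw).const_smul |w|).mono ?_ H.nonneg_fst H.nonneg_snd
  rw [abs_abs]
  nlinarith

end ChordArcFamily

section HalfArc

lemma ChordArc.arcLen_mem_Icc {c M : ℝ} {γ : ℝ → Rn n} (h : ChordArc c M γ) (u : ℝ) {w : ℝ}
    (hw : |w| = 1 / 2) : arcLen γ u w ∈ Icc (c / 2) (M / 2) := by
  have lower := h.le_segMean (u := u) hw.le
  have upper := norm_segMean_le_of_norm_le (f := fun θ => ‖deriv γ θ‖)
    (fun θ => (norm_norm _).trans_le (h.norm_le θ)) (u, w)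
  have := (le_abs_self _).trans upper
  rw [arcLen_eq, hw]
  constructor <;> linarith

lemma continuousOn_halfArcTerm (α : ℝ) {m : ℝ} (hm : 0 < m) :
    ContinuousOn (fun p : ℝ × ℝ => halfArcTerm α p.1 p.2) (Ici m ×ˢ Ici m) := by
  have rpow {g : ℝ × ℝ → ℝ} (hg : Continuous g) (hpos : ∀ p ∈ Ici m ×ˢ Ici m, m ≤ g p) :
      ContinuousOn (fun p => g p ^ (1 - α)) (Ici m ×ˢ Ici m) :=
    hg.continuousOn.rpow_const fun p hp => .inl (hm.trans_le (hpos p hp)).ne'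
  refine (((rpow continuous_snd fun p hp => hp.2).add (rpow continuous_fst fun p hp => hp.1)).sub
    (continuousOn_const.mul (rpow (by fun_prop) fun p hp => ?_))).div_const _
  linarith [mem_Ici.1 hp.1, mem_Ici.1 hp.2]

lemma SquareBound.exists_halfArcTerm (α : ℝ) {m : ℝ} (hm : 0 < m) (M κ : ℝ) :
    ∃ C, 0 ≤ C ∧ ∀ {a b : ℝ} {f g : Bool → Bool → ℝ}, 0 ≤ a → 0 ≤ b → SquareBound κ a b f →
      SquareBound κ a b g → (∀ i j, f i j ∈ Icc m M) → (∀ i j, g i j ∈ Icc m M) →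
      SquareBound C a b (fun i j => halfArcTerm α (f i j) (g i j)) := by
  obtain ⟨C₁, hC₁, rpow⟩ := SquareBound.exists_rpow (1 - α) hm M κ
  obtain ⟨C₂, hC₂, rpow_mean⟩ := SquareBound.exists_rpow (1 - α) hm M (|2⁻¹| * (κ + κ))
  refine ⟨|(α - 1)⁻¹| * (C₁ + C₁ + |2| * C₂), by positivity, fun ha hb hf hg hfm hgm => ?_⟩
  have mean := rpow_mean ha hb ((hf.add hg).const_smul 2⁻¹) fun i j => by
    rw [smul_eq_mul]
    constructor <;> linarith [(hfm i j).1, (hfm i j).2, (hgm i j).1, (hgm i j).2]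
  have term := (((rpow ha hb hg hgm).add (rpow ha hb hf hfm)).sub
    (mean.const_smul 2)).const_smul (α - 1)⁻¹
  simpa only [halfArcTerm, smul_eq_mul, div_eq_inv_mul] using term

lemma ChordArcFamily.exists_squareBound_halfArcEnergy (n : ℕ) {c : ℝ} (hc : 0 < c) (M α : ℝ) :
    ∃ C, 0 ≤ C ∧ ∀ {a b : ℝ} {γ h k : ℝ → Rn n}, ChordArcFamily c M a b γ h k →
      SquareBound C a b (fun i j => halfArcEnergy α (parallelogram γ h k i j)) := by
  obtain ⟨C₀, hC₀, bound_speed⟩ := exists_squareBound_segMean n M hc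
  obtain ⟨C₁, -, bound_arcLen⟩ := exists_squareBound_arcLen n M hc
  obtain ⟨C₂, hC₂, bound_term⟩ := SquareBound.exists_halfArcTerm α (half_pos hc) (M / 2) C₁
  refine ⟨4 * (C₀ * C₂), by positivity, fun {a b γ h k} H => ?_⟩
  have ha := H.nonneg_fst
  have hb := H.nonneg_snd
  have hright : |(1 / 2 : ℝ)| = 1 / 2 := by norm_num
  have hleft : |(-1 / 2 : ℝ)| = 1 / 2 := by norm_num
  have integrand : ∀ u, SquareBound (4 * (C₀ * C₂)) a b (fun i j =>
      ‖deriv (parallelogram γ h k i j) u‖ * halfArcTerm α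
        (arcLen (parallelogram γ h k i j) u (1 / 2))
        (arcLen (parallelogram γ h k i j) u (-1 / 2))) := fun u => by
    have speed := bound_speed H (u, 0) (by norm_num)
    simp only [segMean_zero_right] at speed
    exact speed.mul (bound_term ha hb (bound_arcLen H u _ hright.le) (bound_arcLen H u _ hleft.le)
      (fun i j => (H.chordArc i j).arcLen_mem_Icc u hright)
      (fun i j => (H.chordArc i j).arcLen_mem_Icc u hleft)) ha hb
  have continuous (i j : Bool) : Continuous fun u => ‖deriv (parallelogram γ h k i j) u‖ *
      halfArcTerm α (arcLen (parallelogram γ h k i j) u (1 / 2))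
        (arcLen (parallelogram γ h k i j) u (-1 / 2)) := by
    have H' := H.chordArc i j
    have arcLen_cont (w : ℝ) : Continuous fun u => arcLen (parallelogram γ h k i j) u w :=
      (continuous_arcLen H'.contDiff).comp (by fun_prop : Continuous fun u : ℝ => (u, w))
    exact H'.continuous_deriv.norm.mul ((continuousOn_halfArcTerm α (half_pos hc)).comp_continuous
      ((arcLen_cont _).prodMk (arcLen_cont _)) fun u =>
        ⟨(H'.arcLen_mem_Icc u hright).1, (H'.arcLen_mem_Icc u hleft).1⟩)
  simpa [halfArcEnergy] using SquareBound.intervalIntegral (κ := fun _ => 4 * (C₀ * C₂))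
    zero_le_one (fun i j => (continuous i j).intervalIntegrable _ _) (by simp)
    fun u _ => integrand u

end HalfArc

/-- A `ChordArcFamily` of curves in `H^{1+σ,2}` in which `a` and `b` also bound the Gagliardo
seminorms of `h'` and `k'`. -/
structure SobolevFamily (σ c M a b : ℝ) (γ h k : ℝ → Rn n) : Prop
    extends ChordArcFamily c M a b γ h k where
  gagliardoSq_lt_top : gagliardoSq σ (deriv γ) < ⊤
  gagliardoSq_fst_lt_top : gagliardoSq σ (deriv h) < ⊤
  gagliardoSq_snd_lt_top : gagliardoSq σ (deriv k) < ⊤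
  gagliardoSq_fst_le : (gagliardoSq σ (deriv h)).toReal ≤ a ^ 2
  gagliardoSq_snd_le : (gagliardoSq σ (deriv k)).toReal ≤ b ^ 2

namespace SobolevFamily

variable {σ c M a b : ℝ} {γ h k : ℝ → Rn n}

lemma familySqOsc_div_eq (a b : ℝ) (γ h k : ℝ → Rn n) (p : ℝ × ℝ) (r : ℝ) :
    familySqOsc a b γ h k p / r = meanSqOsc (deriv γ) p / r + meanSqOsc (deriv h) p / r / a ^ 2
      + meanSqOsc (deriv k) p / r / b ^ 2 := by
  rw [familySqOsc]; ring

lemma integrable_familySqOsc_div (H : SobolevFamily σ c M a b γ h k) (hσ : 0 ≤ σ) :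
    Integrable (fun p => familySqOsc a b γ h k p / |p.2| ^ (1 + 2 * σ)) pairMeasure := by
  simp only [familySqOsc_div_eq]
  exact ((integrable_meanSqOsc_div hσ (H.contDiff.continuous_deriv le_rfl)
    H.gagliardoSq_lt_top).add ((integrable_meanSqOsc_div hσ
      (H.contDiff_fst.continuous_deriv le_rfl) H.gagliardoSq_fst_lt_top).div_const _)).add
    ((integrable_meanSqOsc_div hσ (H.contDiff_snd.continuous_deriv le_rfl)
      H.gagliardoSq_snd_lt_top).div_const _)

lemma integral_familySqOsc_div_le (H : SobolevFamily σ c M a b γ h k) (hσ : 0 ≤ σ) :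
    ∫ p, familySqOsc a b γ h k p / |p.2| ^ (1 + 2 * σ) ∂pairMeasure ≤
      (gagliardoSq σ (deriv γ)).toReal + 2 := by
  have hγ := H.contDiff.continuous_deriv le_rfl
  have hh := H.contDiff_fst.continuous_deriv le_rfl
  have hk := H.contDiff_snd.continuous_deriv le_rfl
  have iγ := integrable_meanSqOsc_div hσ hγ H.gagliardoSq_lt_top
  have ih := (integrable_meanSqOsc_div hσ hh H.gagliardoSq_fst_lt_top).div_const (a ^ 2)
  have ik := (integrable_meanSqOsc_div hσ hk H.gagliardoSq_snd_lt_top).div_const (b ^ 2)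
  have split : ∫ p, familySqOsc a b γ h k p / |p.2| ^ (1 + 2 * σ) ∂pairMeasure =
      ∫ p, meanSqOsc (deriv γ) p / |p.2| ^ (1 + 2 * σ) ∂pairMeasure
        + (∫ p, meanSqOsc (deriv h) p / |p.2| ^ (1 + 2 * σ) ∂pairMeasure) / a ^ 2
        + (∫ p, meanSqOsc (deriv k) p / |p.2| ^ (1 + 2 * σ) ∂pairMeasure) / b ^ 2 := by
    simp only [familySqOsc_div_eq, ← integral_div, ← integral_add iγ ih]
    exact integral_add (iγ.add ih) ik
  have lγ := integral_meanSqOsc_div_le hσ hγ H.gagliardoSq_lt_top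
  have lh := div_le_one_of_le₀ ((integral_meanSqOsc_div_le hσ hh H.gagliardoSq_fst_lt_top).trans
    H.gagliardoSq_fst_le) (sq_nonneg a)
  have lk := div_le_one_of_le₀ ((integral_meanSqOsc_div_le hσ hk H.gagliardoSq_snd_lt_top).trans
    H.gagliardoSq_snd_le) (sq_nonneg b)
  linarith

variable (n) (hc : 0 < c) (M)
include hc

lemma exists_squareBound_integral_ohMain (hσ : 0 ≤ σ) : ∃ C, 0 ≤ C ∧ ∀ {a b : ℝ}
    {γ h k : ℝ → Rn n}, SobolevFamily σ c M a b γ h k →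
      (∀ i j, Integrable (ohMain (1 + 2 * σ) (parallelogram γ h k i j)) pairMeasure) ∧
      SquareBound (C * ((gagliardoSq σ (deriv γ)).toReal + 2)) a b
        (fun i j => ∫ p, ohMain (1 + 2 * σ) (parallelogram γ h k i j) p ∂pairMeasure) := by
  obtain ⟨C, hC, bound⟩ := ChordArcFamily.exists_squareBound_ohMain n M hc (1 + 2 * σ)
  refine ⟨C, hC, fun {a b γ h k} H => ?_⟩
  have weight := (H.integrable_familySqOsc_div hσ).const_mul C
  have ae_bound := ae_pairMeasure_abs_lt.mono fun p hp => bound H.toChordArcFamily p hp.le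
  have integrable : ∀ i j, Integrable (ohMain (1 + 2 * σ) (parallelogram γ h k i j)) pairMeasure :=
    fun i j => weight.mono'
      (measurable_ohMain _ (H.chordArc i j).contDiff).aestronglyMeasurable
      (ae_bound.mono fun p hp => hp.norm_le i j)
  refine ⟨integrable, (SquareBound.integral integrable weight ae_bound).mono ?_
    H.nonneg_fst H.nonneg_snd⟩
  rw [integral_const_mul]
  gcongr
  exact H.integral_familySqOsc_div_le hσ

lemma exists_squareBound_oharaER (hσ : 0 < σ) (G : ℝ) : ∃ C, 0 ≤ C ∧ ∀ {a b : ℝ}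
    {γ h k : ℝ → Rn n}, SobolevFamily σ c M a b γ h k → (gagliardoSq σ (deriv γ)).toReal ≤ G →
      (∀ i j, oharaE (1 + 2 * σ) (parallelogram γ h k i j) < ⊤) ∧
      SquareBound C a b (fun i j => oharaER (1 + 2 * σ) (parallelogram γ h k i j)) := by
  obtain ⟨C₁, hC₁, main⟩ := exists_squareBound_integral_ohMain n M hc hσ.le
  obtain ⟨C₂, hC₂, halfArc⟩ :=
    ChordArcFamily.exists_squareBound_halfArcEnergy n hc M (1 + 2 * σ)
  refine ⟨C₁ * (|G| + 2) + C₂, by positivity, fun {a b γ h k} H hG => ?_⟩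
  have hα : 1 < 1 + 2 * σ := by linarith
  obtain ⟨integrable, bound⟩ := main H
  refine ⟨fun i j => ?_, ?_⟩
  · rw [(H.chordArc i j).oharaE_eq hα (integrable i j)]
    exact ENNReal.ofReal_lt_top
  · simp only [fun i j => (H.chordArc i j).oharaER_eq hα (integrable i j)]
    refine (bound.sub (halfArc H.toChordArcFamily)).mono ?_ H.nonneg_fst H.nonneg_snd
    gcongr
    exact hG.trans (le_abs_self G)

end SobolevFamily

namespace ChordArc

variable {c M a b σ : ℝ} {γ h k : ℝ → Rn n}

lemma add_cond {δ : ℝ} (hγ : ChordArc c M γ) (hp : Function.Periodic h 1) (hc : ContDiff ℝ 1 h)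
    (hδ : ∀ u, ‖deriv h u‖ ≤ δ) (hlt : δ < c) (i : Bool) :
    ChordArc (c - δ) (M + δ) (γ + cond i h 0) := by
  have hδ0 := (norm_nonneg _).trans (hδ 0)
  cases i
  · simpa using hγ.mono (sub_le_self c hδ0) (sub_pos.2 hlt) (le_add_of_nonneg_right hδ0)
  · exact hγ.add hp hc hδ hlt

lemma chordArcFamily (hγ : ChordArc c M γ) (hh : Function.Periodic h 1)
    (hk : Function.Periodic k 1) (hhd : ContDiff ℝ 1 h) (hkd : ContDiff ℝ 1 k)
    (ha : ∀ u, ‖deriv h u‖ ≤ a) (hb : ∀ u, ‖deriv k u‖ ≤ b) (ha1 : a ≤ 1) (hb1 : b ≤ 1)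
    (hac : a ≤ c / 4) (hbc : b ≤ c / 4) : ChordArcFamily (c / 2) (M + 2) a b γ h k := by
  have hc := hγ.pos
  refine ⟨fun i j => ?_, hγ.contDiff, hhd, hkd, ha, hb, ha1, hb1⟩
  exact ((hγ.add_cond hh hhd ha (by linarith) i).add_cond hk hkd hb (by linarith) j).mono
    (by linarith) (by linarith) (by linarith)

lemma exists_perInjective_regularCurve (hσ : 1 < 2 * σ) (hγ : ChordArc c M γ) (hγm : MemH1 σ γ) :
    ∃ r > 0, ∀ γ₁, MemH1 σ γ₁ → H1Norm σ (γ₁ - γ) < r → PerInjective γ₁ ∧ RegularCurve γ₁ := by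
  obtain ⟨C, hC, norm_deriv_le⟩ := MemH1.exists_norm_deriv_le n hσ
  have hC0 : 0 < C := by linarith
  refine ⟨c / C, div_pos hγ.pos hC0, fun γ₁ h₁ hr => ?_⟩
  have hk : MemH1 σ (γ₁ - γ) := (H1Space n σ).sub_mem h₁ hγm
  rw [lt_div_iff₀' hC0] at hr
  have := hγ.add hk.1 hk.2.1 (norm_deriv_le _ hk) hr
  rw [add_sub_cancel] at this
  exact ⟨this.perInjective, this.regularCurve⟩

lemma exists_sobolevFamily (hσ : 1 < 2 * σ) (hγ : ChordArc c M γ) (hγm : MemH1 σ γ) :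
    ∃ L, 1 ≤ L ∧ ∃ r > 0, ∀ {h k}, MemH1 σ h → MemH1 σ k → H1Norm σ h < r → H1Norm σ k < r →
      SobolevFamily σ (c / 2) (M + 2) (L * H1Norm σ h) (L * H1Norm σ k) γ h k := by
  have hc := hγ.pos
  obtain ⟨L, hL, norm_deriv_le⟩ := MemH1.exists_norm_deriv_le n hσ
  have hL0 : 0 < L := by linarith
  refine ⟨L, hL, min 1 (c / 4) / L, by positivity, fun {h k} hh hk hhr hkr => ?_⟩
  rw [lt_div_iff₀' hL0, lt_min_iff] at hhr hkr
  have gagliardo_le (f : ℝ → Rn n) : (gagliardoSq σ (deriv f)).toReal ≤ (L * H1Norm σ f) ^ 2 :=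
    (gagliardoSq_toReal_le_H1Norm_sq σ f).trans (pow_le_pow_left₀ (H1Norm_nonneg σ f)
      (le_mul_of_one_le_left (H1Norm_nonneg σ f) hL) 2)
  exact ⟨hγ.chordArcFamily hh.1 hk.1 hh.2.1 hk.2.1 (norm_deriv_le h hh) (norm_deriv_le k hk)
    hhr.1.le hkr.1.le hhr.2.le hkr.2.le, hγm.2.2, hh.2.2, hk.2.2, gagliardo_le h, gagliardo_le k⟩

lemma oharaE_lt_top (hσ : 1 < 2 * σ) (hγ : ChordArc c M γ) (hγm : MemH1 σ γ) :
    oharaE (1 + 2 * σ) γ < ⊤ := by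
  obtain ⟨L, -, r, hr, family⟩ := hγ.exists_sobolevFamily hσ hγm
  obtain ⟨C, -, bound⟩ := SobolevFamily.exists_squareBound_oharaER (σ := σ) n (M + 2)
    (half_pos hγ.pos) (by linarith) (gagliardoSq σ (deriv γ)).toReal
  have h0 : H1Norm σ (0 : ℝ → Rn n) < r := by
    have := H1Norm_smul 0 (MemH1.zero (n := n) (σ := σ))
    rw [zero_smul, abs_zero, zero_mul] at this
    rwa [this]
  simpa [parallelogram] using
    (bound (family MemH1.zero MemH1.zero h0 h0) le_rfl).1 false false

lemma exists_hasBoundedDifferences (hσ : 1 < 2 * σ) (hγ : ChordArc c M γ) (hγm : MemH1 σ γ) :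
    ∃ r C, HasBoundedDifferences (H1Space n σ) (H1Norm σ) (oharaER (1 + 2 * σ)) γ r C := by
  obtain ⟨L, hL, r, hr, family⟩ := hγ.exists_sobolevFamily hσ hγm
  obtain ⟨C, hC, bound⟩ := SobolevFamily.exists_squareBound_oharaER (σ := σ) n (M + 2)
    (half_pos hγ.pos) (by linarith) (gagliardoSq σ (deriv γ)).toReal
  refine ⟨r, C * L ^ 2, hr, fun h hh hhr => ?_, fun h hh k hk hhr hkr => ?_⟩
  · have fst := (bound (family hh hh hhr hhr) le_rfl).2.norm_fst_le false
    simp only [parallelogram, cond_true, cond_false, add_zero, Real.norm_eq_abs] at fst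
    calc |oharaER (1 + 2 * σ) (γ + h) - oharaER (1 + 2 * σ) γ| ≤ C * (L * H1Norm σ h) := fst
      _ = C * L * H1Norm σ h := by ring
      _ ≤ C * L ^ 2 * H1Norm σ h := by
        have := H1Norm_nonneg σ h
        gcongr
        exact le_self_pow₀ hL two_ne_zero
  · have mixed := (bound (family hh hk hhr hkr) le_rfl).2.norm_mixed_le
    simp only [parallelogram, cond_true, cond_false, add_zero, Real.norm_eq_abs] at mixed
    exact mixed.trans_eq (by ring)

end ChordArc

lemma isAbsHomogeneousOn_H1Norm (n : ℕ) (σ : ℝ) :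
    IsAbsHomogeneousOn (H1Space n σ) (H1Norm σ) :=
  ⟨fun h _ => H1Norm_nonneg σ h, fun c _ hh => H1Norm_smul c hh⟩

/-- For `α ∈ (2,3)` and `n ≥ 2`, the energy `E^α` is continuously Fréchet
differentiable on the set of injective regular curves in `H^{(1+α)/2,2}(ℝ/ℤ,ℝⁿ)`;
in particular this set is open, `E^α` is finite on it, and `γ ↦ (E^α)'(γ)` is continuous. -/
theorem statement0 {n : ℕ} (hn : 2 ≤ n) {α : ℝ} (hα : α ∈ Ioo (2:ℝ) 3) :
    -- the set of injective regular curves is open in `H^{(1+α)/2,2}`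
    (∀ γ : ℝ → Rn n, MemH1 ((α - 1) / 2) γ → PerInjective γ → RegularCurve γ →
      ∃ r > (0:ℝ), ∀ γ₁ : ℝ → Rn n, MemH1 ((α - 1) / 2) γ₁ →
        H1Norm ((α - 1) / 2) (γ₁ - γ) < r → PerInjective γ₁ ∧ RegularCurve γ₁) ∧
    -- `E^α` is finite on this set
    (∀ γ : ℝ → Rn n, MemH1 ((α - 1) / 2) γ → PerInjective γ → RegularCurve γ →
      oharaE α γ < ⊤) ∧
    -- `E^α` is `C¹` on this set
    (∃ DE : (ℝ → Rn n) → (ℝ → Rn n) → ℝ,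
      ∀ γ : ℝ → Rn n, MemH1 ((α - 1) / 2) γ → PerInjective γ → RegularCurve γ →
        -- `DE γ` is additive
        (∀ h₁ h₂ : ℝ → Rn n, MemH1 ((α - 1) / 2) h₁ → MemH1 ((α - 1) / 2) h₂ →
          DE γ (h₁ + h₂) = DE γ h₁ + DE γ h₂) ∧
        -- `DE γ` is homogeneous
        (∀ (c : ℝ) (h : ℝ → Rn n), MemH1 ((α - 1) / 2) h → DE γ (c • h) = c * DE γ h) ∧
        -- `DE γ` is bounded
        (∃ M : ℝ, ∀ h : ℝ → Rn n, MemH1 ((α - 1) / 2) h →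
          |DE γ h| ≤ M * H1Norm ((α - 1) / 2) h) ∧
        -- `DE γ` is the Fréchet derivative of `E^α` at `γ`
        (∀ η > (0:ℝ), ∃ r > (0:ℝ), ∀ h : ℝ → Rn n, MemH1 ((α - 1) / 2) h →
          H1Norm ((α - 1) / 2) h < r →
          |oharaER α (γ + h) - oharaER α γ - DE γ h| ≤ η * H1Norm ((α - 1) / 2) h) ∧
        -- `γ ↦ DE γ` is continuous in the operator norm
        (∀ η > (0:ℝ), ∃ r > (0:ℝ), ∀ γ₁ : ℝ → Rn n, MemH1 ((α - 1) / 2) γ₁ →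
          H1Norm ((α - 1) / 2) (γ₁ - γ) < r →
          ∀ h : ℝ → Rn n, MemH1 ((α - 1) / 2) h →
            |DE γ₁ h - DE γ h| ≤ η * H1Norm ((α - 1) / 2) h)) := by
  obtain ⟨σ, rfl⟩ : ∃ σ, α = 1 + 2 * σ := ⟨(α - 1) / 2, by ring⟩
  have hσ : 1 < 2 * σ := by linarith [hα.1]
  simp only [show (1 + 2 * σ - 1) / 2 = σ by ring]
  have hN := isAbsHomogeneousOn_H1Norm n σ
  have chordArc : ∀ γ : ℝ → Rn n, MemH1 σ γ → PerInjective γ → RegularCurve γ →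
      ∃ c M, ChordArc c M γ := fun γ hγ => exists_chordArc hγ.1 hγ.2.1
  refine ⟨fun γ hγ hi hr => ?_, fun γ hγ hi hr => ?_, dyadicDeriv (oharaER (1 + 2 * σ)),
    fun γ hγ hi hr => ?_⟩ <;> obtain ⟨c, M, hc⟩ := chordArc γ hγ hi hr
  · exact hc.exists_perInjective_regularCurve hσ hγ
  · exact hc.oharaE_lt_top hσ hγ
  obtain ⟨r, C, hE⟩ := hc.exists_hasBoundedDifferences hσ hγ
  refine ⟨fun _ _ => hE.dyadicDeriv_add hN, fun c _ => hE.dyadicDeriv_smul hN c,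
    ⟨C, fun _ => hE.abs_dyadicDeriv_le hN⟩,
    fun η hη => hE.exists_abs_sub_dyadicDeriv_le hN hη, fun η hη => ?_⟩
  obtain ⟨r₁, hr₁, regular⟩ := hc.exists_perInjective_regularCurve hσ hγ
  obtain ⟨r₂, hr₂, lipschitz⟩ := hE.exists_abs_dyadicDeriv_sub_le hN hη
  refine ⟨min r₁ r₂, lt_min hr₁ hr₂, fun γ₁ h₁ hlt => ?_⟩
  obtain ⟨hlt₁, hlt₂⟩ := lt_min_iff.1 hlt
  obtain ⟨hi₁, hr₁⟩ := regular γ₁ h₁ hlt₁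
  obtain ⟨c₁, M₁, hc₁⟩ := chordArc γ₁ h₁ hi₁ hr₁
  have bound := lipschitz (γ₁ - γ) ((H1Space n σ).sub_mem h₁ hγ) hlt₂
  rw [add_sub_cancel] at bound
  exact bound (hc₁.exists_hasBoundedDifferences hσ h₁)

end
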